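/- arXiv:1602.01505 — 2 statements merged into one kernel-verified Lean document; each statement's English description precedes it below -/
import Mathlib

section
/- (Lower tail of LERW length) Let d ≥ 5, N ≥ 1, and let D ⊆ Z^d satisfy Q_{4N} ⊆ D. Let L be the chronological loop erasure of simple random walk started at 0 and stopped at its first exit from D, and let M_N be the number of steps in L until its first hit of ∂_i Q_N. Then there exist constants C, c > 0 depending only on d such that for all λ > 0, P( M_N < λ N² ) ≤ C exp( -c λ^{-1} ). -/
open MeasureTheory
open scoped ENNReal Classical

namespace USFPaper

/-- Vertices of the nearest-neighbour integer lattice `ℤ^d`. -/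
abbrev V (d : ℕ) := Fin d → ℤ

variable {d : ℕ}

/-- Nearest-neighbour adjacency in `ℤ^d`. -/
def adj (x y : V d) : Prop := (∑ i, |x i - y i|) = 1

/-- The cube `Q(x,r) = { y : ‖x - y‖_∞ ≤ r }`. -/
def cube (x : V d) (r : ℕ) : Set (V d) := { y | ∀ i, |y i - x i| ≤ (r : ℤ) }

/-- Inner boundary `∂ᵢA` of a set `A`. -/
def innerBdry (A : Set (V d)) : Set (V d) := { x | x ∈ A ∧ ∃ y, adj x y ∧ y ∉ A }

/-- Euclidean distance on `ℤ^d`. -/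
noncomputable def eudist (x y : V d) : ℝ := Real.sqrt (∑ i, ((x i : ℝ) - (y i : ℝ)) ^ 2)

/-- The `k`-th coordinate unit vector. -/
def unitVec (k : ℕ) : V d := fun i => if (i : ℕ) = k then 1 else 0

/-- `μ` is the law of simple random walk on `ℤ^d` started at `x`, as a probability
measure on path space: every nearest-neighbour cylinder of length `n` starting at `x`
has probability `(2d)⁻ⁿ`. -/
def IsSRWLaw (μ : Measure (ℕ → V d)) (x : V d) : Prop :=
  IsProbabilityMeasure μ ∧
  ∀ (n : ℕ) (γ : ℕ → V d), γ 0 = x → (∀ i < n, adj (γ i) (γ (i + 1))) →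
    μ { ω | ∀ i ≤ n, ω i = γ i } = (2 * (d : ℝ≥0∞))⁻¹ ^ n

/-- First exit time `τ_A` from `A`, valued in `ℕ∞` (`⊤` if the path never leaves `A`). -/
noncomputable def exitTimeE (A : Set (V d)) (ω : ℕ → V d) : ENat :=
  if h : ∃ j, ω j ∉ A then (Nat.find h : ENat) else ⊤

/-- First hitting time `T_A` of `A`, valued in `ℕ∞`. -/
noncomputable def hitTimeE (A : Set (V d)) (ω : ℕ → V d) : ENat :=
  if h : ∃ j, ω j ∈ A then (Nat.find h : ENat) else ⊤

/-- First positive hitting time `T⁺_A` of `A`, valued in `ℕ∞`. -/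
noncomputable def hitTimePosE (A : Set (V d)) (ω : ℕ → V d) : ENat :=
  if h : ∃ j, 1 ≤ j ∧ ω j ∈ A then (Nat.find h : ENat) else ⊤

/-- First exit time from `A` as a natural number (junk value `0` if the path never exits). -/
noncomputable def exitTime (A : Set (V d)) (ω : ℕ → V d) : ℕ := (exitTimeE A ω).toNat

/-- Index of the first hit of `A` (junk value `0` if `A` is never hit). -/
noncomputable def hitIdx (A : Set (V d)) (γ : ℕ → V d) : ℕ := (hitTimeE A γ).toNat

/-- First index `≥ t` at which the path lies in `A` (junk value `t`). -/
noncomputable def hitIdxFrom (A : Set (V d)) (t : ℕ) (γ : ℕ → V d) : ℕ :=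
  if h : ∃ j, t ≤ j ∧ γ j ∈ A then Nat.find h else t

/-- The path frozen at its first exit from `D`. -/
noncomputable def stopAt (D : Set (V d)) (ω : ℕ → V d) : ℕ → V d :=
  fun j => if (j : ENat) ≤ exitTimeE D ω then ω j else ω (exitTime D ω)

/-- Time of the last visit of the path to the point `ω t`, at or after time `t`
(junk value if there are infinitely many such visits). -/
noncomputable def lastVisit (ω : ℕ → V d) (t : ℕ) : ℕ := sSup { j | t ≤ j ∧ ω j = ω t }

/-- The times of the chronological loop erasure (last-exit decomposition). -/
noncomputable def leTime (ω : ℕ → V d) : ℕ → ℕ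
  | 0 => lastVisit ω 0
  | k + 1 => lastVisit ω (leTime ω k + 1)

/-- Chronological loop erasure of an (infinite, transient) path. -/
noncomputable def infLoopErase (ω : ℕ → V d) : ℕ → V d := fun k => ω (leTime ω k)

/-- The loop erasure `L` of the walk stopped at its first exit from `D`. -/
noncomputable def lerw (D : Set (V d)) (ω : ℕ → V d) : ℕ → V d := infLoopErase (stopAt D ω)

/-- The event `T_A > τ_D`: the walk does not visit `A` at any time up to (and
including) its first exit from `D`; if it never exits `D`, it never visits `A`. -/
def avoidBeforeExit (D A : Set (V d)) (ω : ℕ → V d) : Prop :=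
  ∀ j : ℕ, (j : ENat) ≤ exitTimeE D ω → ω j ∉ A

/-- The event `T⁺_A > τ_D` (visits of `A` at positive times only). -/
def avoidBeforeExitPos (D A : Set (V d)) (ω : ℕ → V d) : Prop :=
  ∀ j : ℕ, 1 ≤ j → (j : ENat) ≤ exitTimeE D ω → ω j ∉ A

/-- The right-hand face (in the first coordinate direction) of the cube `Q(x₀,m)`. -/
def rightFace (x₀ : V d) (m : ℕ) : Set (V d) :=
  { y | y ∈ cube x₀ m ∧ ∀ i : Fin d, (i : ℕ) = 0 → y i = x₀ i + (m : ℤ) }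

/-!
Let `M` be the step at which the loop erasure first hits `∂ᵢQ_N` and `T_n` the time at which the
walk makes the `n`-th step of its loop erasure for good. If `M = n` and, for some `i ≤ n`, the
`i`-th erased loop occupies the times `[u, u + k]`, then deleting the `k` steps of this loop from
the walk changes neither `M` nor the time `u` at which the `i`-th loop starts. The remaining steps
again form a simple random walk, independent of the deleted ones, so the probability that `M = n`
and the `i`-th loop has length `k` is at most `p_k(0,0) P(M = n)`. With
`B = ∑ₖ (k + 1) p_k(0,0)`, which is finite exactly when `d ≥ 5`, this gives
`E[T_n + 1; M = n] ≤ (n + 1) B P(M = n)`. By Markov's inequality at least half of the event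
`M = n` has `T_n ≤ 4 B n`, so `P(M < λ N²)` is at most twice the probability that the walk reaches
distance `N` within `4 B λ N²` steps, which an exponential martingale bounds by
`C exp(-c λ⁻¹)`.
-/

open Filter ProbabilityTheory
open scoped Topology

lemma measure_le_of_forall_singleton {α : Type*} [MeasurableSpace α] [Countable α]
    [MeasurableSingletonClass α] {μ ν : Measure α} (h : ∀ a, μ {a} ≤ ν {a}) : μ ≤ ν := by
  rw [← Measure.sum_smul_dirac μ, ← Measure.sum_smul_dirac ν]
  refine Measure.le_iff.2 fun s hs => ?_
  simp only [Measure.sum_apply _ hs, Measure.smul_apply]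
  exact ENNReal.tsum_le_tsum fun a => mul_le_mul_left (h a) _

/-! ### Blocks of an i.i.d. sequence -/

section Blocks

variable {ι α β X : Type*} [MeasurableSpace X] (ν : Measure X) [IsProbabilityMeasure ν]
  {f : α → ι} {g : β → ι}

lemma comap_comp_eq_iSup_comap_eval (h : α → ι) :
    MeasurableSpace.pi.comap (fun ω : ι → X => ω ∘ h) =
      ⨆ i ∈ Set.range h, MeasurableSpace.comap (fun ω : ι → X => ω i) ‹_› := by
  simp only [MeasurableSpace.pi, MeasurableSpace.comap_iSup, MeasurableSpace.comap_comp,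
    iSup_range]
  rfl

lemma indepFun_comp_infinitePi (hfg : Disjoint (Set.range f) (Set.range g)) :
    IndepFun (fun ω : ι → X => ω ∘ f) (fun ω => ω ∘ g) (Measure.infinitePi fun _ => ν) := by
  rw [IndepFun_iff_Indep, comap_comp_eq_iSup_comap_eval, comap_comp_eq_iSup_comap_eval]
  have coordinates : iIndepFun (fun i (ω : ι → X) => ω i) (Measure.infinitePi fun _ => ν) :=
    iIndepFun_infinitePi (X := fun _ x => x) fun _ => measurable_id
  exact indep_iSup_of_disjoint (fun i => (measurable_pi_apply i).comap_le) coordinates hfg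

lemma infinitePi_map_comp (hf : Function.Injective f) :
    (Measure.infinitePi fun _ : ι => ν).map (fun ω => ω ∘ f) = Measure.infinitePi fun _ => ν :=
  Measure.map_infinitePi_infinitePi_of_inj hf

lemma measure_infinitePi_blocks (hf : Function.Injective f) (hg : Function.Injective g)
    (hfg : Disjoint (Set.range f) (Set.range g)) {A : Set (α → X)} {B : Set (β → X)}
    (hA : MeasurableSet A) (hB : MeasurableSet B) :
    Measure.infinitePi (fun _ => ν) {ω : ι → X | ω ∘ f ∈ A ∧ ω ∘ g ∈ B} =
      Measure.infinitePi (fun _ => ν) A * Measure.infinitePi (fun _ => ν) B := by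
  have inter := (indepFun_comp_infinitePi ν hfg).measure_inter_preimage_eq_mul A B hA hB
  rwa [← Measure.map_apply (by fun_prop) hA, ← Measure.map_apply (by fun_prop) hB,
    infinitePi_map_comp ν hf, infinitePi_map_comp ν hg] at inter

lemma lintegral_infinitePi_nat {F : X × (ℕ → X) → ℝ≥0∞} (hF : Measurable F) :
    ∫⁻ ω : ℕ → X, F (ω 0, ω ∘ Nat.succ) ∂Measure.infinitePi (fun _ => ν) =
      ∫⁻ x, ∫⁻ ω, F (x, ω) ∂Measure.infinitePi (fun _ => ν) ∂ν := by
  have head_tail : Disjoint (Set.range fun _ : Unit => 0) (Set.range Nat.succ) := by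
    simp
  have indep : IndepFun (fun ω : ℕ → X => ω 0) (fun ω => ω ∘ Nat.succ)
      (Measure.infinitePi fun _ => ν) :=
    (indepFun_comp_infinitePi ν head_tail).comp (measurable_pi_apply ()) measurable_id
  have measurable_tail : Measurable fun ω : ℕ → X => ω ∘ Nat.succ := by fun_prop
  have law := (indepFun_iff_map_prod_eq_prod_map_map (measurable_pi_apply 0).aemeasurable
    measurable_tail.aemeasurable).1 indep
  rw [Measure.infinitePi_map_eval, infinitePi_map_comp ν Nat.succ_injective] at law
  rw [← lintegral_prod _ hF.aemeasurable, ← law, lintegral_map hF (by fun_prop)]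

end Blocks

/-! ### Simple random walk driven by its steps -/

/-- A nearest-neighbour step of `ℤ^d`: a coordinate direction and a sign, `true` being positive. -/
abbrev Step (d : ℕ) := Fin d × Bool

/-- The lattice vector of a step. -/
def Step.vec (s : Step d) : V d := Pi.single s.1 (if s.2 then 1 else -1)

lemma Step.vec_injective : Function.Injective (Step.vec : Step d → V d) := by
  rintro ⟨i, b⟩ ⟨j, c⟩ h
  have hi := congrFun h i
  obtain rfl | hij := eq_or_ne i j
  · cases b <;> cases c <;> simp_all [Step.vec]
  · cases b <;> simp_all [Step.vec]

lemma adj_iff_exists_step (x y : V d) : adj x y ↔ ∃ s : Step d, y = x + s.vec := by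
  constructor
  · intro h
    obtain ⟨i, hi⟩ : ∃ i, x i - y i ≠ 0 := by
      by_contra! hc
      simp [adj, hc] at h
    have split := Finset.add_sum_erase Finset.univ (fun j => |x j - y j|) (Finset.mem_univ i)
    have one_le : 1 ≤ |x i - y i| := Int.one_le_abs hi
    have rest_nonneg : 0 ≤ ∑ j ∈ Finset.univ.erase i, |x j - y j| :=
      Finset.sum_nonneg fun _ _ => abs_nonneg _
    have rest_eq_zero : ∑ j ∈ Finset.univ.erase i, |x j - y j| = 0 := by unfold adj at h; omega
    have eq_off (j : Fin d) (hj : j ≠ i) : y j = x j := by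
      have := (Finset.sum_eq_zero_iff_of_nonneg fun _ _ => abs_nonneg _).1
        rest_eq_zero j (by simp [hj])
      linarith [abs_eq_zero.1 this]
    have abs_eq_one : |x i - y i| = 1 := by unfold adj at h; omega
    obtain ⟨b, hb⟩ : ∃ b : Bool, y i = x i + if b then 1 else -1 := by
      rcases (abs_eq zero_le_one).1 abs_eq_one with h | h
      · exact ⟨false, by simp only [Bool.false_eq_true, if_false]; omega⟩
      · exact ⟨true, by simp only [if_true]; omega⟩
    refine ⟨(i, b), funext fun j => ?_⟩
    obtain rfl | hj := eq_or_ne j i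
    · simpa [Step.vec] using hb
    · simp [Step.vec, hj, eq_off j hj]
  · rintro ⟨⟨i, b⟩, rfl⟩
    rw [adj, Finset.sum_eq_single i (fun j _ hj => by simp [Step.vec, hj]) (by simp)]
    cases b <;> simp [Step.vec]

/-- The walk started at `x` with steps `ξ`. -/
def walk (x : V d) (ξ : ℕ → Step d) (n : ℕ) : V d := x + ∑ i ∈ Finset.range n, (ξ i).vec

lemma walk_zero (x : V d) (ξ : ℕ → Step d) : walk x ξ 0 = x := by simp [walk]

lemma walk_succ (x : V d) (ξ : ℕ → Step d) (n : ℕ) :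
    walk x ξ (n + 1) = walk x ξ n + (ξ n).vec := by
  simp [walk, Finset.sum_range_succ, add_assoc]

lemma walk_succ' (x : V d) (ξ : ℕ → Step d) (n : ℕ) :
    walk x ξ (n + 1) = walk (x + (ξ 0).vec) (ξ ∘ Nat.succ) n := by
  simp [walk, Finset.sum_range_succ', add_assoc, add_comm (ξ 0).vec]

lemma adj_walk (x : V d) (ξ : ℕ → Step d) (n : ℕ) : adj (walk x ξ n) (walk x ξ (n + 1)) :=
  (adj_iff_exists_step _ _).2 ⟨ξ n, walk_succ x ξ n⟩

lemma measurable_walk_apply (x : V d) (n : ℕ) : Measurable fun ξ => walk x ξ n := by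
  have : Measurable (Step.vec (d := d)) := measurable_of_countable _
  unfold walk
  fun_prop

lemma measurable_walk (x : V d) : Measurable (walk x) :=
  measurable_pi_lambda _ (measurable_walk_apply x)

/-- The uniform law on the `2d` steps. -/
noncomputable abbrev stepLaw (d : ℕ) : Measure (Step d) := uniformOn Set.univ

/-- The law of an i.i.d. sequence of uniform steps. -/
noncomputable abbrev stepsLaw (d : ℕ) [NeZero d] : Measure (ℕ → Step d) :=
  Measure.infinitePi fun _ => stepLaw d

lemma stepLaw_singleton (s : Step d) : stepLaw d {s} = (2 * (d : ℝ≥0∞))⁻¹ := by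
  simp [uniformOn_univ, mul_comm]

lemma lintegral_stepLaw (f : Step d → ℝ≥0∞) :
    ∫⁻ s, f s ∂stepLaw d = (2 * (d : ℝ≥0∞))⁻¹ * ∑ s, f s := by
  simp only [lintegral_fintype, stepLaw_singleton, ← Finset.sum_mul, mul_comm]

lemma setOf_walk_eq_pi {x : V d} {γ : ℕ → V d} {n : ℕ} {s : ℕ → Step d} (h0 : γ 0 = x)
    (hs : ∀ i < n, γ (i + 1) = γ i + (s i).vec) :
    {ξ | ∀ i ≤ n, walk x ξ i = γ i} = (Finset.range n : Set ℕ).pi fun i => {s i} := by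
  ext ξ
  simp only [Set.mem_ofPred_eq, Set.mem_pi, Finset.coe_range, Set.mem_Iio, Set.mem_singleton_iff]
  constructor
  · intro h i hi
    have := h (i + 1) hi
    rw [walk_succ, h i hi.le, hs i hi] at this
    exact Step.vec_injective (add_left_cancel this)
  · intro h i
    induction i with
    | zero => simp [walk_zero, h0]
    | succ i ih => intro hi; rw [walk_succ, ih (by omega), h i hi, hs i hi]

lemma setOf_walk_eq_empty {x : V d} {γ : ℕ → V d} {n : ℕ}
    (h : ¬ (γ 0 = x ∧ ∀ i < n, adj (γ i) (γ (i + 1)))) :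
    {ξ | ∀ i ≤ n, walk x ξ i = γ i} = ∅ := by
  refine Set.eq_empty_of_forall_notMem fun ξ hξ => h ⟨?_, fun i hi => ?_⟩
  · rw [← hξ 0 n.zero_le, walk_zero]
  · rw [← hξ i hi.le, ← hξ (i + 1) hi]
    exact adj_walk x ξ i

section Law

variable [NeZero d]

lemma stepsLaw_cylinder {x : V d} {γ : ℕ → V d} {n : ℕ} (h0 : γ 0 = x)
    (hγ : ∀ i < n, adj (γ i) (γ (i + 1))) :
    stepsLaw d {ξ | ∀ i ≤ n, walk x ξ i = γ i} = (2 * (d : ℝ≥0∞))⁻¹ ^ n := by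
  choose! s hs using fun i hi => (adj_iff_exists_step _ _).1 (hγ i hi)
  rw [setOf_walk_eq_pi h0 hs, Measure.infinitePi_pi _ fun _ _ => measurableSet_singleton _]
  simp only [stepLaw_singleton, Finset.prod_const, Finset.card_range]

-- Walk cylinders carry all the mass of the constructed law, so domination forces equality.
lemma IsSRWLaw.map_frestrictLe_eq {μ : Measure (ℕ → V d)} {x : V d} (hμ : IsSRWLaw μ x) (n : ℕ) :
    ((stepsLaw d).map (walk x)).map (Preorder.frestrictLe n) =
      μ.map (Preorder.frestrictLe n) := by
  have := hμ.1
  have meas := Preorder.measurable_frestrictLe (X := fun _ : ℕ => V d) n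
  have := Measure.isProbabilityMeasure_map (μ := stepsLaw d) (measurable_walk x).aemeasurable
  have := Measure.isProbabilityMeasure_map (μ := μ) meas.aemeasurable
  have := Measure.isProbabilityMeasure_map (μ := (stepsLaw d).map (walk x)) meas.aemeasurable
  refine Measure.eq_of_le_of_isProbabilityMeasure (measure_le_of_forall_singleton fun g => ?_)
  obtain ⟨γ, rfl⟩ : ∃ γ : ℕ → V d, Preorder.frestrictLe n γ = g :=
    ⟨fun i => if h : i ≤ n then g ⟨i, Finset.mem_Iic.2 h⟩ else 0, funext fun i => by
      simp [Finset.mem_Iic.1 i.2]⟩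
  have cylinder : Preorder.frestrictLe (π := fun _ => V d) n ⁻¹' {Preorder.frestrictLe n γ} =
      {ω | ∀ i ≤ n, ω i = γ i} :=
    Set.ext fun ω => ⟨fun h i hi => congrFun h ⟨i, Finset.mem_Iic.2 hi⟩,
      fun h => funext fun i => h i (Finset.mem_Iic.1 i.2)⟩
  rw [Measure.map_apply meas (measurableSet_singleton _),
    Measure.map_apply meas (measurableSet_singleton _), Measure.map_apply
      (measurable_walk x) (meas (measurableSet_singleton _)), cylinder, Set.preimage_ofPred_eq]
  by_cases hγ : γ 0 = x ∧ ∀ i < n, adj (γ i) (γ (i + 1))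
  · rw [stepsLaw_cylinder hγ.1 hγ.2, hμ.2 n γ hγ.1 hγ.2]
  · rw [setOf_walk_eq_empty hγ, measure_empty]
    exact zero_le

lemma IsSRWLaw.eq_map_walk {μ : Measure (ℕ → V d)} {x : V d} (hμ : IsSRWLaw μ x) :
    μ = (stepsLaw d).map (walk x) := by
  have := hμ.1
  have limit : IsProjectiveLimit μ fun I => μ.map I.restrict := fun _ => rfl
  have projective := isProjectiveMeasureFamily_map_restrict (P := μ)
    (X := fun n ω => ω n) fun n => (measurable_pi_apply n).aemeasurable
  refine limit.unique ((isProjectiveLimit_nat_iff projective _).2 fun n => ?_)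
  exact hμ.map_frestrictLe_eq n

end Law

/-! ### Green potentials -/

/-- The average of `φ` over the neighbours of a vertex. -/
noncomputable def avg (φ : V d → ℝ≥0∞) (x : V d) : ℝ≥0∞ := ∫⁻ s : Step d, φ (x + s.vec) ∂stepLaw d

/-- The Green potential `∑ₖ Pᵏφ` of `φ`, where `P` is the transition operator `avg`. -/
noncomputable def green (φ : V d → ℝ≥0∞) (x : V d) : ℝ≥0∞ := ∑' n : ℕ, avg^[n] φ x

lemma avg_mono : Monotone (avg : (V d → ℝ≥0∞) → V d → ℝ≥0∞) :=
  fun _ _ h _ => lintegral_mono fun _ => h _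

lemma avg_tsum {ι : Type*} [Countable ι] (φ : ι → V d → ℝ≥0∞) :
    avg (fun y => ∑' i, φ i y) = fun x => ∑' i, avg (φ i) x :=
  funext fun _ => lintegral_tsum fun _ => (measurable_of_countable _).aemeasurable

lemma avg_const_mul (c : ℝ≥0∞) (φ : V d → ℝ≥0∞) (x : V d) :
    avg (fun y => c * φ y) x = c * avg φ x :=
  lintegral_const_mul _ (measurable_of_countable _)

lemma iterate_avg_tsum {ι : Type*} [Countable ι] (φ : ι → V d → ℝ≥0∞) (n : ℕ) :
    avg^[n] (fun y => ∑' i, φ i y) = fun x => ∑' i, avg^[n] (φ i) x := by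
  induction n with
  | zero => rfl
  | succ n ih => simp only [Function.iterate_succ_apply', ih, avg_tsum]

lemma iterate_avg_const_mul (c : ℝ≥0∞) (φ : V d → ℝ≥0∞) (n : ℕ) :
    avg^[n] (fun y => c * φ y) = fun x => c * avg^[n] φ x := by
  induction n with
  | zero => rfl
  | succ n ih => ext x; simp only [Function.iterate_succ_apply', ih, avg_const_mul]

lemma green_mono : Monotone (green : (V d → ℝ≥0∞) → V d → ℝ≥0∞) :=
  fun _ _ h x => ENNReal.tsum_le_tsum fun n => avg_mono.iterate n h x

lemma green_const_mul (c : ℝ≥0∞) (φ : V d → ℝ≥0∞) :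
    green (fun y => c * φ y) = fun x => c * green φ x := by
  ext x
  simp only [green, iterate_avg_const_mul, ENNReal.tsum_mul_left]

lemma green_le_of_superharmonic {φ g : V d → ℝ≥0∞} (h : ∀ x, φ x + avg g x ≤ g x) (x : V d) :
    green φ x ≤ g x := by
  have avg_sum (n : ℕ) (x : V d) : avg (fun y => ∑ k ∈ Finset.range n, avg^[k] φ y) x =
      ∑ k ∈ Finset.range n, avg^[k + 1] φ x := by
    simp only [Function.iterate_succ_apply', avg]
    exact lintegral_finsetSum _ fun _ _ => measurable_of_countable _
  have partial_sum (n : ℕ) : ∀ x, ∑ k ∈ Finset.range n, avg^[k] φ x ≤ g x := by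
    induction n with
    | zero => simp
    | succ n ih =>
      intro x
      rw [Finset.sum_range_succ', ← avg_sum, add_comm]
      exact (add_le_add_right (avg_mono ih x) _).trans (h x)
  exact ENNReal.tsum_le_of_sum_range_le fun n => partial_sum n x

lemma green_green (φ : V d → ℝ≥0∞) (x : V d) :
    green (green φ) x = ∑' n : ℕ, (n + 1) * avg^[n] φ x := by
  calc green (green φ) x = ∑' (j : ℕ) (k : ℕ), avg^[j + k] φ x := by
        unfold green
        simp only [iterate_avg_tsum, Function.iterate_add_apply]
    _ = ∑' n : ℕ, ∑ p ∈ Finset.HasAntidiagonal.antidiagonal n, avg^[p.1 + p.2] φ x := by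
        rw [← ENNReal.tsum_prod, ← Finset.HasAntidiagonal.sigmaAntidiagonalEquivProd.tsum_eq,
          ENNReal.tsum_sigma']
        refine tsum_congr fun n => ?_
        rw [← Finset.tsum_subtype]
        rfl
    _ = _ := by
        refine tsum_congr fun n => ?_
        rw [Finset.sum_congr rfl fun p hp => by rw [Finset.HasAntidiagonal.mem_antidiagonal.1 hp]]
        simp

lemma lintegral_walk [NeZero d] (φ : V d → ℝ≥0∞) (x : V d) (n : ℕ) :
    ∫⁻ ξ, φ (walk x ξ n) ∂stepsLaw d = avg^[n] φ x := by
  induction n generalizing x with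
  | zero => simp [walk_zero]
  | succ n ih =>
    have measurable_vec : Measurable (Step.vec (d := d)) := measurable_of_countable _
    have measurable_φ : Measurable φ := measurable_of_countable _
    simp only [walk_succ', Function.iterate_succ_apply', avg, ← ih]
    exact lintegral_infinitePi_nat (stepLaw d)
      (F := fun p => φ (walk (x + p.1.vec) p.2 n)) (by unfold walk; fun_prop)

/-! ### Superharmonic functions -/

/-- The function `(A + |x|²)^(-β)`, superharmonic for `β < d / 2 - 1` and `A` large. -/
noncomputable def bump (A β : ℝ) (x : V d) : ℝ := (A + ∑ i, (x i : ℝ) ^ 2) ^ (-β)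

lemma eventually_one_add_rpow_le {p κ : ℝ} (hκ : p * (p - 1) / 2 < κ) :
    ∀ᶠ e in 𝓝 (0 : ℝ), (1 + e) ^ p ≤ 1 + p * e + κ * e ^ 2 := by
  set f : ℝ → ℝ := fun e => 1 + p * e + κ * e ^ 2 - (1 + e) ^ p
  have hasDeriv_rpow (q : ℝ) : ∀ᶠ e in 𝓝 (0 : ℝ),
      HasDerivAt (fun e => (1 + e) ^ q) (q * (1 + e) ^ (q - 1)) e := by
    filter_upwards [lt_mem_nhds (show (-1 : ℝ) < 0 by norm_num)] with e he
    have pos : 0 < 1 + e := by linarith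
    simpa using ((hasDerivAt_id e).const_add 1).rpow_const (p := q) (Or.inl pos.ne')
  have hasDeriv_f : ∀ᶠ e in 𝓝 (0 : ℝ),
      HasDerivAt f (p + 2 * κ * e - p * (1 + e) ^ (p - 1)) e := by
    filter_upwards [hasDeriv_rpow p] with e he
    have poly := ((hasDerivAt_id e).const_mul p).const_add 1 |>.add
      ((hasDerivAt_pow 2 e).const_mul κ)
    refine (poly.sub he).congr_deriv ?_
    simp only [mul_one, Nat.cast_ofNat, Nat.add_one_sub_one, pow_one]
    ring
  have deriv_f : deriv f =ᶠ[𝓝 0] fun e => p + 2 * κ * e - p * (1 + e) ^ (p - 1) :=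
    hasDeriv_f.mono fun _ h => h.deriv
  have deriv_deriv_f : deriv (deriv f) 0 = 2 * κ - p * (p - 1) := by
    rw [deriv_f.deriv_eq]
    refine HasDerivAt.deriv ((((hasDerivAt_id (0 : ℝ)).const_mul (2 * κ)).const_add p).sub
      ((hasDeriv_rpow (p - 1)).self_of_nhds.const_mul p) |>.congr_deriv ?_)
    simp
  have localMin : IsLocalMin f 0 := isLocalMin_of_deriv_deriv_pos (by rw [deriv_deriv_f]; linarith)
    (by rw [deriv_f.self_of_nhds]; simp) hasDeriv_f.self_of_nhds.continuousAt
  filter_upwards [localMin] with e he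
  have f_zero : f 0 = 0 := by simp [f]
  rw [f_zero] at he
  exact sub_nonneg.1 he

/-- The change of `|x|²` along the step `s`. -/
def sqIncrement (x : V d) (s : Step d) : ℝ := 1 + 2 * s.vec s.1 * x s.1

lemma sum_sq_add_vec (x : V d) (s : Step d) :
    ∑ i, ((x + s.vec) i : ℝ) ^ 2 = ∑ i, (x i : ℝ) ^ 2 + sqIncrement x s := by
  have coordinate (i : Fin d) : ((x + s.vec) i : ℝ) ^ 2 =
      (x i : ℝ) ^ 2 + if i = s.1 then sqIncrement x s else 0 := by
    obtain ⟨j, b⟩ := s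
    by_cases h : i = j
    · subst h
      simp only [if_true, Pi.add_apply, Step.vec, Pi.single_eq_same, sqIncrement]
      cases b <;> simp only [if_true, Bool.false_eq_true, if_false] <;> push_cast <;> ring
    · simp [Step.vec, h]
  simp only [coordinate, Finset.sum_add_distrib, Finset.sum_ite_eq', Finset.mem_univ, if_true]

lemma sum_sqIncrement (x : V d) : ∑ s, sqIncrement x s = 2 * d := by
  have pair (i : Fin d) : ∑ b, sqIncrement x (i, b) = 2 := by
    simp only [Fintype.sum_bool, sqIncrement, Step.vec, Pi.single_eq_same, if_true,
      Bool.false_eq_true, if_false]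
    push_cast
    ring
  simp only [Fintype.sum_prod_type, pair]
  simp [mul_comm]

lemma sum_sqIncrement_sq (x : V d) :
    ∑ s, sqIncrement x s ^ 2 = 2 * d + 8 * ∑ i, (x i : ℝ) ^ 2 := by
  have pair (i : Fin d) : ∑ b, sqIncrement x (i, b) ^ 2 = 2 + 8 * (x i : ℝ) ^ 2 := by
    simp only [Fintype.sum_bool, sqIncrement, Step.vec, Pi.single_eq_same, if_true,
      Bool.false_eq_true, if_false]
    push_cast
    ring
  simp only [Fintype.sum_prod_type, pair, Finset.sum_add_distrib, Finset.mul_sum]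
  simp [mul_comm]

lemma sqIncrement_sq_le (x : V d) (s : Step d) :
    sqIncrement x s ^ 2 ≤ 2 + 8 * ∑ i, (x i : ℝ) ^ 2 := by
  have coordinate := Finset.single_le_sum (fun i _ => sq_nonneg (x i : ℝ)) (Finset.mem_univ s.1)
  have vec_sq : (s.vec s.1 : ℝ) ^ 2 = 1 := by obtain ⟨i, b⟩ := s; cases b <;> simp [Step.vec]
  have : sqIncrement x s ^ 2 ≤ 2 + 8 * (x s.1 : ℝ) ^ 2 := by
    unfold sqIncrement
    nlinarith [sq_nonneg (1 - 2 * (s.vec s.1 : ℝ) * x s.1)]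
  linarith

lemma bump_add_vec_le {β κ ε A : ℝ} (ε_pos : 0 < ε) (hA : 1 ≤ A) (hAε : 8 / ε ^ 2 < A)
    (taylor : ∀ e, |e| < ε → (1 + e) ^ (-β) ≤ 1 + -β * e + κ * e ^ 2) (x : V d) (s : Step d) :
    bump A β (x + s.vec) ≤ bump A β x * (1 + -β * (sqIncrement x s / (A + ∑ i, (x i : ℝ) ^ 2)) +
      κ * (sqIncrement x s / (A + ∑ i, (x i : ℝ) ^ 2)) ^ 2) := by
  set R := A + ∑ i, (x i : ℝ) ^ 2 with hR
  have sum_nonneg (y : V d) : 0 ≤ ∑ i, (y i : ℝ) ^ 2 := Finset.sum_nonneg fun i _ => sq_nonneg _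
  have R_pos : 0 < R := by linarith [sum_nonneg x]
  have small : |sqIncrement x s / R| < ε := by
    refine abs_lt_of_sq_lt_sq ?_ ε_pos.le
    rw [div_pow, div_lt_iff₀ (by positivity)]
    rw [div_lt_iff₀ (by positivity)] at hAε
    nlinarith [sqIncrement_sq_le x s, sum_nonneg x]
  have factor : A + ∑ i, ((x + s.vec) i : ℝ) ^ 2 = R * (1 + sqIncrement x s / R) := by
    rw [sum_sq_add_vec, mul_add, mul_div_cancel₀ _ R_pos.ne', hR]
    ring
  have one_add_pos : 0 < 1 + sqIncrement x s / R :=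
    pos_of_mul_pos_right (factor ▸ by linarith [sum_nonneg (x + s.vec)]) R_pos.le
  rw [bump, factor, Real.mul_rpow R_pos.le one_add_pos.le, bump, ← hR]
  gcongr
  exact taylor _ small

lemma sum_taylor_le [NeZero d] {κ A : ℝ} (hκ : 0 ≤ κ) (hA : d ≤ A) (p : ℝ) (x : V d) :
    ∑ s : Step d, (1 + p * (sqIncrement x s / (A + ∑ i, (x i : ℝ) ^ 2)) +
      κ * (sqIncrement x s / (A + ∑ i, (x i : ℝ) ^ 2)) ^ 2) ≤
      2 * d * (1 + (p + 4 * κ / d) / (A + ∑ i, (x i : ℝ) ^ 2)) := by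
  have d_pos : (0 : ℝ) < d := by exact_mod_cast NeZero.pos d
  have sum_nonneg : 0 ≤ ∑ i, (x i : ℝ) ^ 2 := Finset.sum_nonneg fun i _ => sq_nonneg _
  set R := A + ∑ i, (x i : ℝ) ^ 2
  have R_pos : 0 < R := by linarith
  have sum_sq_le : κ * ((∑ s, sqIncrement x s ^ 2) / R ^ 2) ≤ κ * (8 / R) := by
    refine mul_le_mul_of_nonneg_left ?_ hκ
    rw [sum_sqIncrement_sq, div_le_div_iff₀ (by positivity) R_pos]
    nlinarith
  simp only [Finset.sum_add_distrib, ← Finset.mul_sum, div_pow, ← Finset.sum_div, sum_sqIncrement,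
    Finset.sum_const, Finset.card_univ, Fintype.card_prod, Fintype.card_fin, Fintype.card_bool,
    nsmul_eq_mul, Nat.cast_mul, Nat.cast_ofNat, mul_one]
  refine (add_le_add_right sum_sq_le _).trans_eq ?_
  field_simp
  ring

lemma exists_bump_superharmonic [NeZero d] {β : ℝ} (hβ : 0 < β) (hβd : β + 1 < d / 2) :
    ∃ c > 0, ∀ᶠ A in atTop, ∀ x : V d,
      c * bump A (β + 1) x + (2 * (d : ℝ))⁻¹ * ∑ s : Step d, bump A β (x + s.vec) ≤ bump A β x := by
  have one_le_d : (1 : ℝ) ≤ d := by exact_mod_cast NeZero.one_le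
  obtain ⟨κ, hκ, hκd⟩ : ∃ κ, -β * (-β - 1) / 2 < κ ∧ κ < β * d / 4 :=
    exists_between (by nlinarith)
  obtain ⟨ε, ε_pos, taylor⟩ := Metric.eventually_nhds_iff.1 (eventually_one_add_rpow_le hκ)
  simp only [dist_zero_right, Real.norm_eq_abs] at taylor
  have κ_pos : 0 < κ := by nlinarith
  refine ⟨β - 4 * κ / d, sub_pos.2 ((div_lt_iff₀ (by linarith)).2 (by linarith)), ?_⟩
  filter_upwards [eventually_gt_atTop (8 / ε ^ 2), eventually_ge_atTop (d : ℝ)] with A hAε hAd x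
  have R_pos : 0 < A + ∑ i, (x i : ℝ) ^ 2 :=
    add_pos_of_pos_of_nonneg (by linarith) (Finset.sum_nonneg fun i _ => sq_nonneg _)
  have bump_succ : bump A (β + 1) x = bump A β x / (A + ∑ i, (x i : ℝ) ^ 2) := by
    rw [bump, neg_add', Real.rpow_sub_one R_pos.ne', bump]
  have bump_nonneg : 0 ≤ bump A β x := Real.rpow_nonneg R_pos.le _
  have sum_bump : ∑ s : Step d, bump A β (x + s.vec) ≤
      bump A β x * (2 * d * (1 + (-β + 4 * κ / d) / (A + ∑ i, (x i : ℝ) ^ 2))) := by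
    refine (Finset.sum_le_sum fun s _ =>
      bump_add_vec_le ε_pos (one_le_d.trans hAd) hAε (fun e he => taylor he) x s).trans ?_
    rw [← Finset.mul_sum]
    exact mul_le_mul_of_nonneg_left (sum_taylor_le κ_pos.le hAd (-β) x) bump_nonneg
  rw [bump_succ]
  refine (add_le_add_right (mul_le_mul_of_nonneg_left sum_bump (by positivity)) _).trans_eq ?_
  field_simp
  ring

/-- `bump`, as a function to be fed to `avg` and `green`. -/
noncomputable def ebump (A β : ℝ) (x : V d) : ℝ≥0∞ := ENNReal.ofReal (bump A β x)

lemma avg_ofReal [NeZero d] {f : V d → ℝ} (hf : ∀ x, 0 ≤ f x) (x : V d) :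
    avg (fun y => ENNReal.ofReal (f y)) x =
      ENNReal.ofReal ((2 * (d : ℝ))⁻¹ * ∑ s : Step d, f (x + s.vec)) := by
  have d_pos : (0 : ℝ) < d := by exact_mod_cast NeZero.pos d
  rw [avg, lintegral_stepLaw, ENNReal.ofReal_mul (by positivity),
    ENNReal.ofReal_sum_of_nonneg fun s _ => hf _, ENNReal.ofReal_inv_of_pos (by positivity)]
  simp [ENNReal.ofReal_mul]

lemma exists_green_ebump_le [NeZero d] {β : ℝ} (hβ : 0 < β) (hβd : β + 1 < d / 2) :
    ∃ K : ℝ≥0∞, K ≠ ∞ ∧ ∀ᶠ A in atTop, ∀ x : V d, green (ebump A (β + 1)) x ≤ K * ebump A β x := by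
  obtain ⟨c, c_pos, superharmonic⟩ := exists_bump_superharmonic (d := d) hβ hβd
  refine ⟨ENNReal.ofReal c⁻¹, ENNReal.ofReal_ne_top, ?_⟩
  filter_upwards [superharmonic, eventually_ge_atTop 0] with A hA A_nonneg
  have bump_nonneg (γ : ℝ) (x : V d) : 0 ≤ bump A γ x :=
    Real.rpow_nonneg (add_nonneg A_nonneg (Finset.sum_nonneg fun i _ => sq_nonneg _)) _
  refine green_le_of_superharmonic fun x => ?_
  unfold ebump
  have avg_nonneg : 0 ≤ (2 * (d : ℝ))⁻¹ * ∑ s : Step d, bump A β (x + s.vec) :=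
    mul_nonneg (by positivity) (Finset.sum_nonneg fun s _ => bump_nonneg _ _)
  rw [avg_const_mul, avg_ofReal (bump_nonneg β), ← ENNReal.ofReal_mul (by positivity),
    ← ENNReal.ofReal_mul (by positivity), ← ENNReal.ofReal_add (bump_nonneg _ _) (by positivity)]
  refine ENNReal.ofReal_le_ofReal ?_
  rw [← inv_mul_cancel_left₀ c_pos.ne' (bump A (β + 1) x), ← mul_add]
  exact mul_le_mul_of_nonneg_left (hA x) (by positivity)

/-! ### Return probabilities in dimension at least five -/

/-- The probability `pₙ(0)` that the walk is back at its starting point at time `n`. -/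
noncomputable def returnProb (d : ℕ) [NeZero d] (n : ℕ) : ℝ≥0∞ :=
  stepsLaw d {ξ | walk 0 ξ n = 0}

lemma returnProb_eq_iterate_avg [NeZero d] (n : ℕ) :
    returnProb d n = avg^[n] (({0} : Set (V d)).indicator 1) 0 := by
  rw [← lintegral_walk]
  have := lintegral_indicator_one (μ := stepsLaw d) (measurable_walk_apply 0 n
    (measurableSet_singleton (0 : V d)))
  exact this.symm

/-- The bubble diagram `∑ₙ (n + 1) pₙ(0) = ∑ₓ G(0, x)²` of the walk. -/
noncomputable def bubble (d : ℕ) [NeZero d] : ℝ≥0∞ := ∑' n : ℕ, (n + 1) * returnProb d n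

lemma one_le_bubble [NeZero d] : 1 ≤ bubble d := by
  have returnProb_zero : returnProb d 0 = 1 := by simp [returnProb, walk_zero]
  calc (1 : ℝ≥0∞) = ((0 : ℕ) + 1) * returnProb d 0 := by simp [returnProb_zero]
    _ ≤ bubble d := ENNReal.le_tsum (f := fun k : ℕ => ((k : ℝ≥0∞) + 1) * returnProb d k) 0

lemma bubble_eq_green_green [NeZero d] :
    bubble d = green (green (({0} : Set (V d)).indicator 1)) 0 := by
  simp only [bubble, returnProb_eq_iterate_avg, green_green]

lemma bubble_ne_top [NeZero d] (hd : 5 ≤ d) : bubble d ≠ ∞ := by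
  have hd' : (5 : ℝ) ≤ d := by exact_mod_cast hd
  obtain ⟨K₁, hK₁, green₁⟩ :=
    exists_green_ebump_le (d := d) (β := 5 / 4) (by norm_num) (by linarith)
  obtain ⟨K₂, hK₂, green₂⟩ :=
    exists_green_ebump_le (d := d) (β := 1 / 4) (by norm_num) (by linarith)
  rw [show (1 / 4 : ℝ) + 1 = 5 / 4 by norm_num] at green₂
  obtain ⟨A, hA₁, hA₂, A_pos⟩ := (green₁.and (green₂.and (eventually_gt_atTop 0))).exists
  have ebump_pos : ebump A (5 / 4 + 1) (0 : V d) ≠ 0 := by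
    simpa [ebump, bump] using Real.rpow_pos_of_pos A_pos _
  set c := (ebump A (5 / 4 + 1) (0 : V d))⁻¹
  have indicator_le : ({0} : Set (V d)).indicator 1 ≤ fun x => c * ebump A (5 / 4 + 1) x := by
    refine Set.indicator_le fun x hx => ?_
    rw [Set.mem_singleton_iff.1 hx, ENNReal.inv_mul_cancel ebump_pos ENNReal.ofReal_ne_top]
    rfl
  have bound : green (green (({0} : Set (V d)).indicator 1)) 0 ≤
      c * (K₁ * (K₂ * ebump A (1 / 4) (0 : V d))) := by
    calc green (green (({0} : Set (V d)).indicator 1)) 0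
        ≤ green (green fun x => c * ebump A (5 / 4 + 1) x) 0 :=
          green_mono (green_mono indicator_le) 0
      _ = c * green (green (ebump A (5 / 4 + 1))) 0 := by rw [green_const_mul, green_const_mul]
      _ ≤ c * green (fun x => K₁ * ebump A (5 / 4) x) 0 := by gcongr; exact green_mono hA₁ 0
      _ = c * (K₁ * green (ebump A (5 / 4)) 0) := by rw [green_const_mul]
      _ ≤ c * (K₁ * (K₂ * ebump A (1 / 4) 0)) := by gcongr; exact hA₂ 0
  rw [bubble_eq_green_green]
  exact ne_top_of_le_ne_top (ENNReal.mul_ne_top (ENNReal.inv_ne_top.2 ebump_pos)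
    (ENNReal.mul_ne_top hK₁ (ENNReal.mul_ne_top hK₂ ENNReal.ofReal_ne_top))) bound

/-! ### Hitting bounds -/

lemma measurableSet_walk_mem (x : V d) (n : ℕ) (A : Set (V d)) :
    MeasurableSet {ξ | walk x ξ n ∈ A} :=
  measurable_walk_apply x n A.to_countable.measurableSet

lemma measurableSet_exists_walk_mem (x : V d) (t : ℕ) (A : Set (V d)) :
    MeasurableSet {ξ | ∃ j ≤ t, walk x ξ j ∈ A} := by
  simp only [← exists_prop, Set.ofPred_exists]
  exact .iUnion fun j => .iUnion fun _ => measurableSet_walk_mem x j A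

lemma stepsLaw_exists_walk_succ [NeZero d] (x : V d) (t : ℕ) (A : Set (V d)) :
    stepsLaw d {ξ | ∃ j ≤ t, walk x ξ (j + 1) ∈ A} =
      avg (fun y => stepsLaw d {ξ | ∃ j ≤ t, walk y ξ j ∈ A}) x := by
  set S : Set (Step d × (ℕ → Step d)) := {p | ∃ j ≤ t, walk (x + p.1.vec) p.2 j ∈ A}
  have measurable_S : MeasurableSet S := by
    have (j : ℕ) : Measurable fun p : Step d × (ℕ → Step d) => walk (x + p.1.vec) p.2 j := by
      have : Measurable (Step.vec (d := d)) := measurable_of_countable _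
      unfold walk
      fun_prop
    simp only [S, ← exists_prop, Set.ofPred_exists]
    exact .iUnion fun j => .iUnion fun _ => this j A.to_countable.measurableSet
  have measurable_next : MeasurableSet {ξ | ∃ j ≤ t, walk x ξ (j + 1) ∈ A} := by
    simp only [← exists_prop, Set.ofPred_exists]
    exact .iUnion fun j => .iUnion fun _ => measurableSet_walk_mem x (j + 1) A
  have section_eq (ξ : ℕ → Step d) :
      S.indicator (1 : Step d × (ℕ → Step d) → ℝ≥0∞) (ξ 0, ξ ∘ Nat.succ) =
        {ξ | ∃ j ≤ t, walk x ξ (j + 1) ∈ A}.indicator 1 ξ := by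
    simp only [S, Set.indicator_apply, Set.mem_ofPred_eq, walk_succ' x ξ, Pi.one_apply]
  calc stepsLaw d {ξ | ∃ j ≤ t, walk x ξ (j + 1) ∈ A}
      = ∫⁻ ξ, S.indicator 1 (ξ 0, ξ ∘ Nat.succ) ∂stepsLaw d := by
        rw [lintegral_congr section_eq, lintegral_indicator_one measurable_next]
    _ = ∫⁻ s, ∫⁻ ξ, S.indicator 1 (s, ξ) ∂stepsLaw d ∂stepLaw d :=
        lintegral_infinitePi_nat (stepLaw d) (measurable_one.indicator measurable_S)
    _ = avg (fun y => stepsLaw d {ξ | ∃ j ≤ t, walk y ξ j ∈ A}) x :=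
        lintegral_congr fun s =>
          lintegral_indicator_one (measurableSet_exists_walk_mem (x + s.vec) t A)

lemma stepsLaw_exists_walk_mem_le [NeZero d] {A : Set (V d)} {h : ℕ → V d → ℝ≥0∞}
    (one_le : ∀ t, ∀ x ∈ A, 1 ≤ h t x) (avg_le : ∀ t x, avg (h t) x ≤ h (t + 1) x) (t : ℕ) :
    ∀ x, stepsLaw d {ξ | ∃ j ≤ t, walk x ξ j ∈ A} ≤ h t x := by
  induction t with
  | zero =>
    intro x
    by_cases hx : x ∈ A
    · exact prob_le_one.trans (one_le 0 x hx)
    · simp [walk_zero, hx]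
  | succ t ih =>
    intro x
    by_cases hx : x ∈ A
    · exact prob_le_one.trans (one_le _ x hx)
    · have first_step_stays : {ξ | ∃ j ≤ t + 1, walk x ξ j ∈ A} ⊆
          {ξ | ∃ j ≤ t, walk x ξ (j + 1) ∈ A} := by
        rintro ξ ⟨_ | j, hj, hA⟩
        · exact absurd (walk_zero x ξ ▸ hA) hx
        · exact ⟨j, by omega, hA⟩
      calc stepsLaw d {ξ | ∃ j ≤ t + 1, walk x ξ j ∈ A}
          ≤ avg (fun y => stepsLaw d {ξ | ∃ j ≤ t, walk y ξ j ∈ A}) x :=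
            (measure_mono first_step_stays).trans_eq (stepsLaw_exists_walk_succ x t A)
        _ ≤ avg (h t) x := avg_mono ih x
        _ ≤ h (t + 1) x := avg_le t x

/-- The exponential moment `∑ᵢ cosh (θ xᵢ)`. -/
noncomputable def coshSum (θ : ℝ) (x : V d) : ℝ := ∑ i, Real.cosh (θ * x i)

lemma coshSum_nonneg (θ : ℝ) (x : V d) : 0 ≤ coshSum θ x :=
  Finset.sum_nonneg fun _ _ => (Real.cosh_pos _).le

lemma sum_cosh_add_vec_le (θ : ℝ) (x : V d) (i j : Fin d) :
    ∑ b, Real.cosh (θ * ((x + Step.vec (j, b)) i : ℤ)) ≤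
      2 * (Real.cosh θ * Real.cosh (θ * x i)) := by
  rw [Fintype.sum_bool]
  obtain rfl | hij := eq_or_ne i j
  · refine le_of_eq ?_
    simp only [Step.vec, Pi.add_apply, Pi.single_eq_same, Int.cast_add, mul_add, Real.cosh_add,
      ↓reduceIte, Bool.false_eq_true, Int.cast_one, Int.cast_neg, mul_one, mul_neg, Real.cosh_neg,
      Real.sinh_neg]
    ring
  · have := le_mul_of_one_le_left (Real.cosh_pos (θ * x i)).le (Real.one_le_cosh θ)
    simp only [Step.vec, Pi.add_apply, Pi.single_eq_of_ne hij, add_zero]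
    linarith

lemma sum_coshSum_add_vec_le (θ : ℝ) (x : V d) :
    ∑ s : Step d, coshSum θ (x + s.vec) ≤ 2 * d * (Real.cosh θ * coshSum θ x) := by
  have bound (i : Fin d) : ∑ s : Step d, Real.cosh (θ * ((x + s.vec) i : ℤ)) ≤
      2 * d * (Real.cosh θ * Real.cosh (θ * x i)) := by
    rw [Fintype.sum_prod_type]
    refine (Finset.sum_le_card_nsmul _ _ _ fun j _ => sum_cosh_add_vec_le θ x i j).trans_eq ?_
    rw [Finset.card_univ, Fintype.card_fin, nsmul_eq_mul]
    ring
  simp only [coshSum, Finset.mul_sum]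
  rw [Finset.sum_comm]
  exact Finset.sum_le_sum fun i _ => bound i

lemma exp_le_two_mul_coshSum {θ : ℝ} (hθ : 0 ≤ θ) {N : ℕ} {x : V d} {i : Fin d}
    (hi : (N : ℤ) ≤ |x i|) : Real.exp (θ * N) ≤ 2 * coshSum θ x := by
  have hN : (N : ℝ) ≤ |(x i : ℝ)| := by exact_mod_cast hi
  calc Real.exp (θ * N) ≤ Real.exp (θ * |(x i : ℝ)|) := by gcongr
    _ ≤ 2 * Real.cosh (θ * |(x i : ℝ)|) := by
        rw [Real.cosh_eq]; linarith [Real.exp_pos (-(θ * |(x i : ℝ)|))]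
    _ = 2 * Real.cosh (θ * x i) := by
        rw [← Real.cosh_abs, abs_mul, abs_abs, ← abs_mul, Real.cosh_abs]
    _ ≤ 2 * coshSum θ x := by
        gcongr
        exact Finset.single_le_sum (f := fun i => Real.cosh (θ * x i))
          (fun _ _ => (Real.cosh_pos _).le) (Finset.mem_univ i)

lemma stepsLaw_exists_le_abs_walk_le [NeZero d] {θ : ℝ} (hθ : 0 ≤ θ) (N t : ℕ) :
    stepsLaw d {ξ | ∃ j ≤ t, ∃ i, (N : ℤ) ≤ |walk 0 ξ j i|} ≤
      ENNReal.ofReal (2 * d * Real.exp (-(θ * N)) * Real.cosh θ ^ t) := by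
  set a : ℕ → ℝ := fun t => 2 * Real.exp (-(θ * N)) * Real.cosh θ ^ t with ha
  have a_nonneg (t : ℕ) : 0 ≤ a t := by have := Real.cosh_pos θ; positivity
  refine (stepsLaw_exists_walk_mem_le (A := {x : V d | ∃ i, (N : ℤ) ≤ |x i|})
    (h := fun t x => ENNReal.ofReal (a t * coshSum θ x)) ?_ ?_ t 0).trans_eq ?_
  · rintro t x ⟨i, hi⟩
    rw [ENNReal.one_le_ofReal]
    calc (1 : ℝ) = Real.exp (-(θ * N)) * Real.exp (θ * N) := by rw [← Real.exp_add]; simp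
      _ ≤ Real.exp (-(θ * N)) * (2 * coshSum θ x) := by gcongr; exact exp_le_two_mul_coshSum hθ hi
      _ ≤ Real.exp (-(θ * N)) * (2 * coshSum θ x) * Real.cosh θ ^ t :=
          le_mul_of_one_le_right (mul_nonneg (Real.exp_pos _).le
            (mul_nonneg zero_le_two (coshSum_nonneg θ x))) (one_le_pow₀ (Real.one_le_cosh θ))
      _ = a t * coshSum θ x := by ring
  · intro t x
    rw [avg_ofReal fun y => mul_nonneg (a_nonneg t) (coshSum_nonneg θ y), ← Finset.mul_sum]
    refine ENNReal.ofReal_le_ofReal ?_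
    have d_pos : (0 : ℝ) < d := by exact_mod_cast NeZero.pos d
    calc (2 * (d : ℝ))⁻¹ * (a t * ∑ s : Step d, coshSum θ (x + s.vec))
        ≤ (2 * (d : ℝ))⁻¹ * (a t * (2 * d * (Real.cosh θ * coshSum θ x))) := by
          gcongr
          exact sum_coshSum_add_vec_le θ x
      _ = a (t + 1) * coshSum θ x := by
          simp only [ha, pow_succ]
          field_simp
  · simp only [ha, coshSum, Pi.zero_apply, Int.cast_zero, mul_zero, Real.cosh_zero,
      Finset.sum_const, Finset.card_univ, Fintype.card_fin, nsmul_eq_mul, mul_one]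
    congr 1
    ring

/-! ### Loops of the chronological loop erasure -/

/-- The times from `t` on at which the path is at its time-`t` position. -/
def futureVisits (η : ℕ → V d) (t : ℕ) : Set ℕ := {j | t ≤ j ∧ η j = η t}

lemma isGreatest_lastVisit {η : ℕ → V d} {t : ℕ} (h : (futureVisits η t).Finite) :
    IsGreatest (futureVisits η t) (lastVisit η t) :=
  ⟨Nat.sSup_mem ⟨t, le_rfl, rfl⟩ h.bddAbove, fun _ hj => le_csSup h.bddAbove hj⟩

lemma isGreatest_futureVisits_comp {η : ℕ → V d} {g : ℕ → ℕ} (hg : StrictMono g) {t m : ℕ}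
    (h : IsGreatest (futureVisits η (g t)) (g m)) : IsGreatest (futureVisits (η ∘ g) t) m :=
  ⟨⟨hg.le_iff_le.1 h.1.1, h.1.2⟩, fun _ hj => hg.le_iff_le.1 (h.2 ⟨hg.monotone hj.1, hj.2⟩)⟩

/-- The time at which the `i`-th erased loop starts; it ends at time `leTime η i`. -/
noncomputable def loopStart (η : ℕ → V d) : ℕ → ℕ
  | 0 => 0
  | i + 1 => leTime η i + 1

/-- The number of steps of the `i`-th erased loop (by truncated subtraction `0` if the loop has no
end because its starting point is visited infinitely often). -/
noncomputable def loopLength (η : ℕ → V d) (i : ℕ) : ℕ := leTime η i - loopStart η i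

lemma leTime_eq_lastVisit (η : ℕ → V d) (i : ℕ) :
    leTime η i = lastVisit η (loopStart η i) := by
  cases i <;> rfl

/-- The first `n + 1` loops of `η` really end at their last exit times, so that no junk value of
`lastVisit` enters `leTime η 0, …, leTime η n`. -/
def HasLoopsUpTo (η : ℕ → V d) (n : ℕ) : Prop :=
  ∀ i ≤ n, IsGreatest (futureVisits η (loopStart η i)) (leTime η i)

namespace HasLoopsUpTo

variable {η : ℕ → V d} {n i j : ℕ}

lemma mono (h : HasLoopsUpTo η n) (hi : i ≤ n) : HasLoopsUpTo η i :=
  fun j hj => h j (hj.trans hi)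

lemma loopStart_le_leTime (h : HasLoopsUpTo η n) (hi : i ≤ n) : loopStart η i ≤ leTime η i :=
  (h i hi).1.1

lemma apply_leTime (h : HasLoopsUpTo η n) (hi : i ≤ n) :
    η (leTime η i) = η (loopStart η i) :=
  (h i hi).1.2

lemma leTime_lt_loopStart (h : HasLoopsUpTo η n) (hi : i ≤ n) (hji : j < i) :
    leTime η j < loopStart η i := by
  induction i with
  | zero => omega
  | succ i ih =>
    obtain hji | rfl := Nat.lt_succ_iff_lt_or_eq.1 hji
    · have := ih (by omega) hji
      have := h.loopStart_le_leTime (i := i) (by omega)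
      rw [loopStart]
      omega
    · exact Nat.lt_succ_self _

lemma loopStart_lt_loopStart (h : HasLoopsUpTo η n) (hi : i ≤ n) (hji : j < i) :
    loopStart η j < loopStart η i :=
  (h.loopStart_le_leTime (hji.le.trans hi)).trans_lt (h.leTime_lt_loopStart hi hji)

lemma loopStart_add_loopLength (h : HasLoopsUpTo η n) (hi : i ≤ n) :
    loopStart η i + loopLength η i = leTime η i :=
  Nat.add_sub_cancel' (h.loopStart_le_leTime hi)

lemma leTime_add_one_eq_sum (h : HasLoopsUpTo η n) :
    leTime η n + 1 = ∑ i ∈ Finset.range (n + 1), (loopLength η i + 1) := by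
  induction n with
  | zero => simp [loopLength, loopStart]
  | succ n ih =>
    have := h.loopStart_add_loopLength le_rfl
    rw [Finset.sum_range_succ, ← ih (h.mono n.le_succ)]
    rw [loopStart] at this
    omega

end HasLoopsUpTo

/-! ### Deleting a loop -/

/-- The increasing enumeration of the times outside `[u, u + k)`. -/
def skip (u k j : ℕ) : ℕ := if j < u then j else j + k

section Skip

variable {u k j : ℕ}

lemma skip_of_lt (h : j < u) : skip u k j = j := if_pos h

lemma skip_of_le (h : u ≤ j) : skip u k j = j + k := if_neg h.not_gt

lemma skip_succ (h : j + 1 ≠ u) : skip u k (j + 1) = skip u k j + 1 := by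
  unfold skip
  split_ifs <;> omega

lemma strictMono_skip (u k : ℕ) : StrictMono (skip u k) := by
  refine strictMono_nat_of_lt_succ fun j => ?_
  unfold skip
  split_ifs <;> omega

lemma walk_comp_skip {x : V d} {ξ : ℕ → Step d} (h : walk x ξ (u + k) = walk x ξ u) :
    walk x (ξ ∘ skip u k) = walk x ξ ∘ skip u k := by
  have at_u : walk x ξ (skip u k u) = walk x ξ u := by rw [skip_of_le le_rfl, h]
  funext j
  rw [Function.comp_apply]
  induction j with
  | zero =>
    obtain rfl | hu := Nat.eq_zero_or_pos u
    · rw [at_u, walk_zero, walk_zero]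
    · rw [skip_of_lt hu, walk_zero, walk_zero]
  | succ j ih =>
    rw [walk_succ, ih, Function.comp_apply]
    by_cases hj : j + 1 = u
    · rw [hj, at_u, skip_of_lt (by omega), ← hj, walk_succ]
    · rw [skip_succ hj, walk_succ]

lemma loopStart_comp_skip {η : ℕ → V d} {i : ℕ} (hu : loopStart η i = u)
    (ih : ∀ l < i, skip u k (leTime (η ∘ skip u k) l) = leTime η l) :
    loopStart (η ∘ skip u k) i = u := by
  cases i with
  | zero => exact hu
  | succ l =>
    have ih := ih l l.lt_succ_self
    rw [skip] at ih
    simp only [loopStart] at hu ⊢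
    split_ifs at ih <;> omega

end Skip

namespace HasLoopsUpTo

variable {η : ℕ → V d} {n i j u k : ℕ}

lemma skip_loopStart_of_ne (h : HasLoopsUpTo η n) (hi : i ≤ n) (hu : loopStart η i = u)
    (hj : j ≤ n) (hji : j ≠ i)
    (ih : ∀ l < j, skip u k (leTime (η ∘ skip u k) l) = leTime η l) :
    skip u k (loopStart (η ∘ skip u k) j) = loopStart η j := by
  have start_ne : loopStart η j ≠ u := hu ▸ hji.lt_or_gt.elim
    (fun hlt => (h.loopStart_lt_loopStart hi hlt).ne)
    (fun hgt => (h.loopStart_lt_loopStart hj hgt).ne')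
  cases j with
  | zero => exact skip_of_lt (Nat.pos_of_ne_zero start_ne.symm)
  | succ l =>
    have ih := ih l l.lt_succ_self
    simp only [loopStart] at start_ne ⊢
    rw [skip_succ, ih]
    intro hl
    rw [skip_of_lt (by omega)] at ih
    omega

-- At the deleted loop, `skip u k u = u + k` is the last visit of `η` to its own position.
lemma isGreatest_skip_loopStart (h : HasLoopsUpTo η n) (hi : i ≤ n) (hu : loopStart η i = u)
    (hk : leTime η i = u + k) (hj : j ≤ n)
    (ih : ∀ l < j, skip u k (leTime (η ∘ skip u k) l) = leTime η l) :
    IsGreatest (futureVisits η (skip u k (loopStart (η ∘ skip u k) j))) (leTime η j) := by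
  obtain hji | rfl := ne_or_eq j i
  · rw [h.skip_loopStart_of_ne hi hu hj hji ih]
    exact h j hj
  · rw [loopStart_comp_skip hu ih, skip_of_le le_rfl, ← hk]
    exact ⟨⟨le_rfl, rfl⟩, fun m hm => (h j hj).2 ⟨(h.loopStart_le_leTime hj).trans hm.1,
      hm.2.trans (h.apply_leTime hj)⟩⟩

lemma leTime_mem_range_skip (h : HasLoopsUpTo η n) (hi : i ≤ n) (hu : loopStart η i = u)
    (hk : leTime η i = u + k) (hj : j ≤ n) : leTime η j ∈ Set.range (skip u k) := by
  obtain hji | hij := lt_or_ge j i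
  · exact ⟨_, skip_of_lt (hu ▸ h.leTime_lt_loopStart hi hji)⟩
  · have : u + k ≤ leTime η j := by
      obtain hij | rfl := hij.lt_or_eq
      · have := h.leTime_lt_loopStart hj hij
        have := h.loopStart_le_leTime hj
        omega
      · exact hk.ge
    exact ⟨leTime η j - k, by rw [skip_of_le] <;> omega⟩

lemma skip_leTime_comp_skip (h : HasLoopsUpTo η n) (hi : i ≤ n) (hu : loopStart η i = u)
    (hk : leTime η i = u + k) (hj : j ≤ n) :
    skip u k (leTime (η ∘ skip u k) j) = leTime η j := by
  induction j using Nat.strong_induction_on with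
  | _ j ih =>
    obtain ⟨m, hm⟩ := h.leTime_mem_range_skip hi hu hk hj
    have greatest := h.isGreatest_skip_loopStart hi hu hk hj fun l hl => ih l hl (hl.le.trans hj)
    rw [← hm] at greatest ⊢
    have greatest' := isGreatest_futureVisits_comp (strictMono_skip u k) greatest
    rw [leTime_eq_lastVisit]
    exact congrArg _ greatest'.csSup_eq

lemma infLoopErase_comp_skip (h : HasLoopsUpTo η n) (hi : i ≤ n) (hu : loopStart η i = u)
    (hk : leTime η i = u + k) (hj : j ≤ n) :
    infLoopErase (η ∘ skip u k) j = infLoopErase η j :=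
  congrArg η (h.skip_leTime_comp_skip hi hu hk hj)

end HasLoopsUpTo

/-! ### Loop erasure of a stopped path -/

section StopAt

variable {D : Set (V d)} {ω : ℕ → V d} {i j : ℕ}

lemma stopAt_eq_apply_min (h : ∃ m, ω m ∉ D) (j : ℕ) :
    stopAt D ω j = ω (min j (Nat.find h)) := by
  simp only [stopAt, exitTime, exitTimeE, dif_pos h, Nat.cast_le, ENat.toNat_natCast]
  split_ifs with hj
  · rw [min_eq_left hj]
  · rw [min_eq_right (not_le.1 hj).le]

lemma stopAt_eq_self (h : ∀ m, ω m ∈ D) : stopAt D ω = ω := by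
  funext j
  simp [stopAt, exitTimeE, h]

lemma stopAt_zero (D : Set (V d)) (ω : ℕ → V d) : stopAt D ω 0 = ω 0 := by
  simp [stopAt]

lemma stopAt_succ (D : Set (V d)) (ω : ℕ → V d) (j : ℕ) :
    stopAt D ω (j + 1) = if stopAt D ω j ∈ D then ω (j + 1) else stopAt D ω j := by
  by_cases h : ∃ m, ω m ∉ D
  · rw [stopAt_eq_apply_min h, stopAt_eq_apply_min h]
    obtain hj | hj := lt_or_ge j (Nat.find h)
    · rw [min_eq_left hj, min_eq_left hj.le, if_pos (not_not.1 (Nat.find_min h hj))]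
    · rw [min_eq_right (hj.trans j.le_succ), min_eq_right hj, if_neg (Nat.find_spec h)]
  · have h : ∀ m, ω m ∈ D := by simpa using h
    rw [stopAt_eq_self h, if_pos (h j)]

lemma stopAt_eq_of_mem (h : stopAt D ω j ∈ D) : stopAt D ω j = ω j := by
  cases j with
  | zero => exact stopAt_zero D ω
  | succ j =>
    rw [stopAt_succ] at h ⊢
    split_ifs at h ⊢ with hj
    · rfl
    · exact absurd h hj

lemma stopAt_mem_of_le (h : stopAt D ω j ∈ D) (hij : i ≤ j) : stopAt D ω i ∈ D := by
  induction j, hij using Nat.le_induction with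
  | base => exact h
  | succ j _ ih =>
    refine ih (by_contra fun hj => hj ?_)
    rwa [stopAt_succ, if_neg hj] at h

lemma stopAt_comp_skip {u k : ℕ} (hD : stopAt D ω (u + k) ∈ D) :
    stopAt D (ω ∘ skip u k) = stopAt D ω ∘ skip u k := by
  have at_u : stopAt D ω (skip u k u) = ω (skip u k u) :=
    stopAt_eq_of_mem (by rwa [skip_of_le le_rfl])
  funext j
  rw [Function.comp_apply]
  induction j with
  | zero =>
    rw [stopAt_zero, Function.comp_apply]
    obtain rfl | hu := Nat.eq_zero_or_pos u
    · exact at_u.symm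
    · rw [skip_of_lt hu, stopAt_zero]
  | succ j ih =>
    rw [stopAt_succ, ih, Function.comp_apply]
    by_cases hj : j + 1 = u
    · rw [skip_of_lt (by omega), if_pos (stopAt_mem_of_le hD (by omega)), hj, at_u]
    · rw [skip_succ hj, stopAt_succ]

lemma finite_setOf_stopAt_mem (hω : Tendsto ω atTop cofinite)
    {Q : Set (V d)} (hQ : Q.Finite) (hQD : Q ⊆ D) : {j | stopAt D ω j ∈ Q}.Finite := by
  have visits : {j | ω j ∈ Q}.Finite := by
    have := hω.eventually hQ.compl_mem_cofinite
    rw [← Nat.cofinite_eq_atTop, eventually_cofinite] at this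
    simpa using this
  refine visits.subset fun j (hj : stopAt D ω j ∈ Q) => ?_
  rwa [stopAt_eq_of_mem (hQD hj)] at hj

lemma isGreatest_leTime_stopAt (hω : Tendsto ω atTop cofinite)
    (h : stopAt D ω (loopStart (stopAt D ω) i) ∈ D) :
    IsGreatest (futureVisits (stopAt D ω) (loopStart (stopAt D ω) i)) (leTime (stopAt D ω) i) := by
  rw [leTime_eq_lastVisit]
  exact isGreatest_lastVisit <| (finite_setOf_stopAt_mem hω (Set.finite_singleton _)
    (Set.singleton_subset_iff.2 h)).subset fun _ hj => hj.2

end StopAt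

section FirstHit

variable {D Q : Set (V d)} {ω : ℕ → V d} {i n : ℕ}

lemma stopAt_loopStart_mem (hQD : Q ⊆ D) (h0 : ω 0 ∈ Q) (hadj : ∀ j, adj (ω j) (ω (j + 1)))
    (hω : Tendsto ω atTop cofinite)
    (hi : ∀ j < i, lerw D ω j ∉ innerBdry Q) : stopAt D ω (loopStart (stopAt D ω) i) ∈ Q := by
  induction i with
  | zero => rwa [loopStart, stopAt_zero]
  | succ i ih =>
    have start_mem := ih fun j hj => hi j (by omega)
    have end_mem : stopAt D ω (leTime (stopAt D ω) i) ∈ Q :=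
      (isGreatest_leTime_stopAt hω (hQD start_mem)).1.2 ▸ start_mem
    refine by_contra fun next_notMem => hi i i.lt_succ_self ⟨end_mem, _, ?_, next_notMem⟩
    rw [lerw, infLoopErase, loopStart, stopAt_succ, if_pos (hQD end_mem),
      stopAt_eq_of_mem (hQD end_mem)]
    exact hadj _

lemma hasLoopsUpTo_stopAt (hQD : Q ⊆ D) (h0 : ω 0 ∈ Q) (hadj : ∀ j, adj (ω j) (ω (j + 1)))
    (hω : Tendsto ω atTop cofinite)
    (hn : ∀ j < n, lerw D ω j ∉ innerBdry Q) : HasLoopsUpTo (stopAt D ω) n :=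
  fun i hi => isGreatest_leTime_stopAt hω
    (hQD (stopAt_loopStart_mem hQD h0 hadj hω fun j hj => hn j (by omega)))

lemma exists_lerw_mem_innerBdry (hQ : Q.Finite) (hQD : Q ⊆ D) (h0 : ω 0 ∈ Q)
    (hadj : ∀ j, adj (ω j) (ω (j + 1))) (hω : Tendsto ω atTop cofinite) :
    ∃ n, lerw D ω n ∈ innerBdry Q := by
  by_contra! h
  have loops (n : ℕ) : HasLoopsUpTo (stopAt D ω) n :=
    hasLoopsUpTo_stopAt hQD h0 hadj hω fun j _ => h j
  have starts_mem (i : ℕ) : loopStart (stopAt D ω) i ∈ {j | stopAt D ω j ∈ Q} :=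
    stopAt_loopStart_mem hQD h0 hadj hω fun j _ => h j
  have starts_strictMono : StrictMono (loopStart (stopAt D ω)) := fun i j hij =>
    (loops j).loopStart_lt_loopStart le_rfl hij
  exact Set.infinite_of_injective_forall_mem starts_strictMono.injective starts_mem
    (finite_setOf_stopAt_mem hω hQ hQD)

end FirstHit

lemma isLeast_hitIdx {A : Set (V d)} {γ : ℕ → V d} (h : ∃ j, γ j ∈ A) :
    IsLeast {j | γ j ∈ A} (hitIdx A γ) := by
  have : hitIdx A γ = Nat.find h := by simp [hitIdx, hitTimeE, h]
  exact this ▸ Nat.isLeast_find h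

/-! ### Measurability of the loop erasure -/

lemma lastVisit_eq_iSup (η : ℕ → V d) (t : ℕ) :
    lastVisit η t = ⨆ j, if t ≤ j ∧ η j = η t then j else t := by
  refine congrArg sSup (Set.ext fun m => ⟨fun hm => ⟨m, if_pos hm⟩, ?_⟩)
  rintro ⟨j, rfl⟩
  dsimp only
  split_ifs with hj
  exacts [hj, ⟨le_rfl, rfl⟩]

lemma measurable_lastVisit (t : ℕ) : Measurable fun η : ℕ → V d => lastVisit η t := by
  simp only [lastVisit_eq_iSup]
  refine .iSup fun j => .ite ?_ measurable_const measurable_const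
  exact (MeasurableSet.const _).inter
    (measurableSet_eq_fun (measurable_pi_apply j) (measurable_pi_apply t))

lemma measurable_apply_of_countable {α β γ : Type*} [MeasurableSpace α] [MeasurableSpace β]
    [MeasurableSpace γ] [Countable β] [MeasurableSingletonClass β] {F : β → α → γ} {f : α → β}
    (hF : ∀ b, Measurable (F b)) (hf : Measurable f) : Measurable fun a => F (f a) a :=
  (measurable_from_prod_countable_left (f := fun p : α × β => F p.2 p.1) hF).comp
    (measurable_id.prodMk hf)

lemma measurable_leTime (i : ℕ) : Measurable fun η : ℕ → V d => leTime η i := by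
  induction i with
  | zero => exact measurable_lastVisit 0
  | succ i ih =>
    exact measurable_apply_of_countable (F := fun t η => lastVisit η (t + 1))
      (fun t => measurable_lastVisit (t + 1)) ih

lemma measurable_loopStart (i : ℕ) : Measurable fun η : ℕ → V d => loopStart η i := by
  cases i with
  | zero => exact measurable_const
  | succ i => exact (measurable_leTime i).add_const 1

lemma measurable_loopLength (i : ℕ) : Measurable fun η : ℕ → V d => loopLength η i :=
  (measurable_leTime i).sub (measurable_loopStart i)

lemma measurable_infLoopErase : Measurable (infLoopErase (d := d)) :=
  measurable_pi_lambda _ fun i =>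
    measurable_apply_of_countable (F := fun t η => η t) measurable_pi_apply (measurable_leTime i)

lemma measurable_stopAt (D : Set (V d)) : Measurable (stopAt D) := by
  refine measurable_pi_lambda _ fun j => ?_
  induction j with
  | zero => simpa only [stopAt_zero] using measurable_pi_apply 0
  | succ j ih =>
    simp only [stopAt_succ]
    exact .ite (ih D.to_countable.measurableSet) (measurable_pi_apply _) ih

lemma measurable_hitIdx (A : Set (V d)) : Measurable (hitIdx A) := by
  have attained (γ : ℕ → V d) : ∃ j, γ j ∈ A ∨ ∀ i, γ i ∉ A := by
    by_cases h : ∃ j, γ j ∈ A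
    · exact h.imp fun _ => .inl
    · exact ⟨0, .inr (not_exists.1 h)⟩
  have find_eq (γ : ℕ → V d) : Nat.find (attained γ) = hitIdx A γ := by
    by_cases h : ∃ j, γ j ∈ A
    · have least := isLeast_hitIdx h
      exact (Nat.find_eq_iff _).2 ⟨.inl least.1, fun j hj => not_or.2
        ⟨fun hmem => hj.not_ge (least.2 hmem), fun hmiss => hmiss _ least.1⟩⟩
    · have hitIdx_eq_zero : hitIdx A γ = 0 := by simp [hitIdx, hitTimeE, h]
      rw [hitIdx_eq_zero, Nat.find_eq_zero]
      exact .inr (not_exists.1 h)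
  have hit (j : ℕ) : MeasurableSet {γ : ℕ → V d | γ j ∈ A} :=
    measurable_pi_apply j A.to_countable.measurableSet
  rw [← funext find_eq]
  refine measurable_find attained fun j => measurableSet_setOfPred.2 ?_
  exact (measurableSet_setOfPred.1 (hit j)).or
    (.forall fun i => (measurableSet_setOfPred.1 (hit i)).not)

/-- The walk from the origin, frozen at its first exit from `D`. -/
noncomputable def stoppedWalk (D : Set (V d)) (ξ : ℕ → Step d) : ℕ → V d := stopAt D (walk 0 ξ)

lemma measurable_stoppedWalk (D : Set (V d)) : Measurable (stoppedWalk D) :=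
  (measurable_stopAt D).comp (measurable_walk 0)

/-- The event that the loop erasure of the walk stopped on leaving `D` first hits `A` at its `n`-th
step; unlike `hitIdx A L = n`, it excludes the junk value of a path missing `A`. -/
def firstHitEvent (D A : Set (V d)) (n : ℕ) : Set (ℕ → Step d) :=
  {ξ | IsLeast {j | infLoopErase (stoppedWalk D ξ) j ∈ A} n}

lemma measurableSet_firstHitEvent (D A : Set (V d)) (n : ℕ) :
    MeasurableSet (firstHitEvent D A n) := by
  have hit (j : ℕ) : MeasurableSet {ξ | infLoopErase (stoppedWalk D ξ) j ∈ A} :=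
    (measurable_pi_apply j).comp (measurable_infLoopErase.comp (measurable_stoppedWalk D))
      A.to_countable.measurableSet
  exact measurableSet_setOfPred.2 ((measurableSet_setOfPred.1 (hit n)).and
    (.forall fun j => (measurableSet_setOfPred.1 (hit j)).imp measurable_const))

lemma disjoint_firstHitEvent (D A : Set (V d)) :
    Pairwise (Function.onFun Disjoint (firstHitEvent D A)) :=
  fun _ _ hmn => Set.disjoint_left.2 fun _ hm hn => hmn (hm.unique hn)

/-! ### Transience -/

lemma tendsto_cofinite_of_finite_returns {ω : ℕ → V d}
    (h : ∀ u, {k | ω (u + k) = ω u}.Finite) : Tendsto ω atTop cofinite := by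
  rw [← Nat.cofinite_eq_atTop]
  refine Tendsto.cofinite_of_finite_preimage_singleton fun x => ?_
  obtain hx | ⟨u, rfl⟩ := (ω ⁻¹' {x}).eq_empty_or_nonempty
  · exact hx ▸ Set.finite_empty
  · refine ((Set.finite_Iio u).union ((h u).image (u + ·))).subset fun j hj => ?_
    obtain hju | huj := lt_or_ge j u
    · exact .inl hju
    · exact .inr ⟨j - u, by simpa [Nat.add_sub_cancel' huj] using hj, by simp [huj]⟩

lemma walk_add_eq_iff (x : V d) (ξ : ℕ → Step d) (u k : ℕ) :
    walk x ξ (u + k) = walk x ξ u ↔ ∑ j : Fin k, (ξ (u + j)).vec = 0 := by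
  rw [walk, walk, add_right_inj, Finset.sum_range_add, add_eq_left,
    ← Fin.sum_univ_eq_sum_range fun j => (ξ (u + j)).vec]

lemma measurableSet_sum_vec_eq_zero (k : ℕ) :
    MeasurableSet {ζ : Fin k → Step d | ∑ j, (ζ j).vec = 0} := by
  have : Measurable (Step.vec (d := d)) := measurable_of_countable _
  exact measurableSet_eq_fun (by fun_prop) measurable_const

section Cut

variable [NeZero d]

lemma returnProb_eq (k : ℕ) :
    returnProb d k =
      Measure.infinitePi (fun _ => stepLaw d) {ζ : Fin k → Step d | ∑ j, (ζ j).vec = 0} := by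
  rw [← infinitePi_map_comp (stepLaw d) (Fin.val_injective (n := k)),
    Measure.map_apply (by fun_prop) (measurableSet_sum_vec_eq_zero k), returnProb]
  congr 1
  ext ξ
  simpa [walk_zero] using walk_add_eq_iff 0 ξ 0 k

-- The loop uses the steps in `[u, u + k)`, the walk without it all the others.
lemma stepsLaw_loop_inter_comp_skip (u k : ℕ) {B : Set (ℕ → Step d)} (hB : MeasurableSet B) :
    stepsLaw d {ξ | walk 0 ξ (u + k) = walk 0 ξ u ∧ ξ ∘ skip u k ∈ B} =
      returnProb d k * stepsLaw d B := by
  have disjoint_blocks : Disjoint (Set.range fun j : Fin k => u + (j : ℕ))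
      (Set.range (skip u k)) := by
    rw [Set.disjoint_left]
    rintro _ ⟨j, rfl⟩ ⟨m, hm⟩
    have := j.isLt
    dsimp only [skip] at hm
    split_ifs at hm <;> omega
  rw [returnProb_eq, ← measure_infinitePi_blocks (stepLaw d)
    (fun i j h => Fin.ext (Nat.add_left_cancel h)) (strictMono_skip u k).injective disjoint_blocks
    (measurableSet_sum_vec_eq_zero k) hB]
  simp only [walk_add_eq_iff, Set.mem_ofPred_eq, Function.comp_apply]

lemma stepsLaw_loop (u k : ℕ) :
    stepsLaw d {ξ | walk 0 ξ (u + k) = walk 0 ξ u} = returnProb d k := by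
  simpa using stepsLaw_loop_inter_comp_skip (d := d) u k MeasurableSet.univ

lemma ae_tendsto_walk_cofinite (h : bubble d ≠ ∞) :
    ∀ᵐ ξ ∂stepsLaw d, Tendsto (walk 0 ξ) atTop cofinite := by
  have summable : ∑' k, returnProb d k ≠ ∞ :=
    ne_top_of_le_ne_top h (ENNReal.tsum_le_tsum fun k => le_mul_of_one_le_left' (by simp))
  have returns (u : ℕ) : ∀ᵐ ξ ∂stepsLaw d, {k | walk 0 ξ (u + k) = walk 0 ξ u}.Finite :=
    ae_finite_setOfPred_mem (s := fun k => {ξ | walk 0 ξ (u + k) = walk 0 ξ u})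
      (by simpa only [stepsLaw_loop] using summable)
  filter_upwards [ae_all_iff.2 returns] with ξ hξ using tendsto_cofinite_of_finite_returns hξ

end Cut

/-! ### Size bias of the erased loops -/

section General

variable {α β : Type*} [MeasurableSpace α] [MeasurableSpace β] [Countable β]
  [MeasurableSingletonClass β]

lemma setLIntegral_comp_eq_tsum (μ : Measure α) (s : Set α) {f : α → β} (hf : Measurable f)
    (g : β → ℝ≥0∞) : ∫⁻ a in s, g (f a) ∂μ = ∑' b, g b * μ (f ⁻¹' {b} ∩ s) := by
  rw [← lintegral_map (measurable_of_countable g) hf, lintegral_countable']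
  refine tsum_congr fun b => ?_
  have fiber : MeasurableSet (f ⁻¹' {b}) := hf (measurableSet_singleton b)
  rw [Measure.map_apply hf (measurableSet_singleton b), Measure.restrict_apply fiber]

lemma tsum_measure_preimage_inter (μ : Measure α) (s : Set α) {f : α → β} (hf : Measurable f) :
    ∑' b, μ (f ⁻¹' {b} ∩ s) = μ s := by
  simpa using (setLIntegral_comp_eq_tsum μ s hf fun _ => 1).symm

lemma measure_le_two_mul_of_setLIntegral_le {μ : Measure α} {s : Set α} (hs : μ s ≠ ∞)
    {f : α → ℝ≥0∞} {c : ℝ≥0∞} (hc0 : c ≠ 0) (hc : c ≠ ∞)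
    (hf : Measurable f) (h : ∫⁻ a in s, f a ∂μ ≤ c * μ s) :
    μ s ≤ 2 * μ (s ∩ {a | f a ≤ 2 * c}) := by
  have markov : 2 * μ (s \ {a | f a ≤ 2 * c}) ≤ μ s := by
    refine (ENNReal.mul_le_mul_iff_right hc0 hc).1 ?_
    calc c * (2 * μ (s \ {a | f a ≤ 2 * c}))
        = ∫⁻ _ in s \ {a | f a ≤ 2 * c}, 2 * c ∂μ := by rw [setLIntegral_const]; ring
      _ ≤ ∫⁻ a in s \ {a | f a ≤ 2 * c}, f a ∂μ :=
        setLIntegral_mono hf fun a ha => (not_le.1 ha.2).le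
      _ ≤ ∫⁻ a in s, f a ∂μ := lintegral_mono_set Set.sdiff_subset
      _ ≤ c * μ s := h
  refine (ENNReal.add_le_add_iff_right hs).1 ?_
  calc μ s + μ s = 2 * μ s := (two_mul _).symm
    _ ≤ 2 * (μ (s ∩ {a | f a ≤ 2 * c}) + μ (s \ {a | f a ≤ 2 * c})) := by
      gcongr
      exact measure_le_inter_add_sdiff μ s _
    _ ≤ 2 * μ (s ∩ {a | f a ≤ 2 * c}) + μ s := by
      rw [mul_add]
      gcongr

end General

lemma isLeast_of_forall_le_mem_iff {s t : Set ℕ} {n : ℕ} (h : ∀ j ≤ n, j ∈ s ↔ j ∈ t)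
    (hs : IsLeast s n) : IsLeast t n :=
  ⟨(h n le_rfl).1 hs.1, fun j hj => le_of_not_gt fun hlt => hlt.not_ge (hs.2 ((h j hlt.le).2 hj))⟩

section FirstHit

variable {D Q : Set (V d)} {ξ : ℕ → Step d} {i n u : ℕ}

lemma hasLoopsUpTo_stoppedWalk (hQD : Q ⊆ D) (h0 : 0 ∈ Q)
    (hω : Tendsto (walk 0 ξ) atTop cofinite) (hξ : ξ ∈ firstHitEvent D (innerBdry Q) n) :
    HasLoopsUpTo (stoppedWalk D ξ) n :=
  hasLoopsUpTo_stopAt hQD (by rwa [walk_zero]) (adj_walk 0 ξ) hω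
    fun _ hj hmem => hj.not_ge (hξ.2 hmem)

lemma stoppedWalk_leTime_mem (hQD : Q ⊆ D) (h0 : 0 ∈ Q)
    (hω : Tendsto (walk 0 ξ) atTop cofinite) (hξ : ξ ∈ firstHitEvent D (innerBdry Q) n)
    (hi : i ≤ n) : stoppedWalk D ξ (leTime (stoppedWalk D ξ) i) ∈ D := by
  rw [(hasLoopsUpTo_stoppedWalk hQD h0 hω hξ).apply_leTime hi]
  exact hQD (stopAt_loopStart_mem hQD (by rwa [walk_zero]) (adj_walk 0 ξ) hω
    fun j hj hmem => (hj.trans_le hi).not_ge (hξ.2 hmem))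

lemma walk_loopStart_add_loopLength (hQD : Q ⊆ D) (h0 : 0 ∈ Q)
    (hω : Tendsto (walk 0 ξ) atTop cofinite) (hξ : ξ ∈ firstHitEvent D (innerBdry Q) n)
    (hi : i ≤ n) :
    walk 0 ξ (loopStart (stoppedWalk D ξ) i + loopLength (stoppedWalk D ξ) i) =
      walk 0 ξ (loopStart (stoppedWalk D ξ) i) := by
  have loops := hasLoopsUpTo_stoppedWalk hQD h0 hω hξ
  have end_mem := stoppedWalk_leTime_mem hQD h0 hω hξ hi
  have closed := loops.apply_leTime hi
  have start_mem := end_mem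
  rw [closed] at start_mem
  rw [loops.loopStart_add_loopLength hi]
  exact (stopAt_eq_of_mem end_mem).symm.trans (closed.trans (stopAt_eq_of_mem start_mem))

lemma comp_skip_mem_firstHitEvent (hQD : Q ⊆ D) (h0 : 0 ∈ Q)
    (hω : Tendsto (walk 0 ξ) atTop cofinite) (hξ : ξ ∈ firstHitEvent D (innerBdry Q) n)
    (hi : i ≤ n) (hu : loopStart (stoppedWalk D ξ) i = u) {k : ℕ}
    (hk : loopLength (stoppedWalk D ξ) i = k) :
    loopStart (stoppedWalk D (ξ ∘ skip u k)) i = u ∧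
      ξ ∘ skip u k ∈ firstHitEvent D (innerBdry Q) n := by
  have loops := hasLoopsUpTo_stoppedWalk hQD h0 hω hξ
  have closed := walk_loopStart_add_loopLength hQD h0 hω hξ hi
  have end_eq := loops.loopStart_add_loopLength hi
  have end_mem := stoppedWalk_leTime_mem hQD h0 hω hξ hi
  rw [hu, hk] at closed end_eq
  rw [← end_eq] at end_mem
  have cut : stoppedWalk D (ξ ∘ skip u k) = stoppedWalk D ξ ∘ skip u k := by
    rw [stoppedWalk, walk_comp_skip closed]
    exact stopAt_comp_skip end_mem
  refine ⟨?_, isLeast_of_forall_le_mem_iff (fun j hj => ?_) hξ⟩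
  · rw [cut]
    exact loopStart_comp_skip hu fun l hl =>
      loops.skip_leTime_comp_skip hi hu end_eq.symm (hl.le.trans hi)
  · rw [Set.mem_ofPred_eq, Set.mem_ofPred_eq, cut,
      loops.infLoopErase_comp_skip hi hu end_eq.symm hj]

lemma pos_of_mem_firstHitEvent (hQD : Q ⊆ D) (h0 : 0 ∈ Q) (h0' : 0 ∉ innerBdry Q)
    (hω : Tendsto (walk 0 ξ) atTop cofinite)
    (hξ : ξ ∈ firstHitEvent D (innerBdry Q) n) : 0 < n := by
  refine Nat.pos_of_ne_zero ?_
  rintro rfl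
  have start : infLoopErase (stoppedWalk D ξ) 0 = 0 := by
    rw [infLoopErase, (hasLoopsUpTo_stoppedWalk hQD h0 hω hξ).apply_leTime le_rfl, loopStart,
      stoppedWalk, stopAt_zero, walk_zero]
  exact h0' (start ▸ hξ.1)

lemma walk_leTime_mem_of_mem_firstHitEvent {A : Set (V d)} (hA : A ⊆ D)
    (hξ : ξ ∈ firstHitEvent D A n) :
    walk 0 ξ (leTime (stoppedWalk D ξ) n) ∈ A := by
  have hit : stopAt D (walk 0 ξ) (leTime (stoppedWalk D ξ) n) ∈ A := hξ.1
  rwa [stopAt_eq_of_mem (hA hit)] at hit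

end FirstHit

section LoopLaw

variable [NeZero d] {D Q : Set (V d)} {i n : ℕ}

lemma stepsLaw_loopStart_loopLength_firstHit_le (hQD : Q ⊆ D) (h0 : 0 ∈ Q)
    (hB : bubble d ≠ ∞) (hi : i ≤ n) (u k : ℕ) :
    stepsLaw d ((fun ξ => loopStart (stoppedWalk D ξ) i) ⁻¹' {u} ∩
        ({ξ | loopLength (stoppedWalk D ξ) i = k} ∩ firstHitEvent D (innerBdry Q) n)) ≤
      returnProb d k * stepsLaw d ((fun ξ => loopStart (stoppedWalk D ξ) i) ⁻¹' {u} ∩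
        firstHitEvent D (innerBdry Q) n) := by
  have measurable_start : Measurable fun ξ => loopStart (stoppedWalk D ξ) i :=
    (measurable_loopStart i).comp (measurable_stoppedWalk D)
  rw [← stepsLaw_loop_inter_comp_skip u k ((measurable_start (measurableSet_singleton u)).inter
    (measurableSet_firstHitEvent D (innerBdry Q) n))]
  refine measure_mono_ae ?_
  filter_upwards [ae_tendsto_walk_cofinite hB] with ξ hω ⟨hu, hk, hξ⟩
  rw [Set.mem_preimage, Set.mem_singleton_iff] at hu
  rw [Set.mem_ofPred_eq] at hk
  have closed := walk_loopStart_add_loopLength hQD h0 hω hξ hi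
  rw [hu, hk] at closed
  exact ⟨closed, comp_skip_mem_firstHitEvent hQD h0 hω hξ hi hu hk⟩

lemma stepsLaw_loopLength_firstHit_le (hQD : Q ⊆ D) (h0 : 0 ∈ Q) (hB : bubble d ≠ ∞)
    (hi : i ≤ n) (k : ℕ) :
    stepsLaw d ({ξ | loopLength (stoppedWalk D ξ) i = k} ∩ firstHitEvent D (innerBdry Q) n) ≤
      returnProb d k * stepsLaw d (firstHitEvent D (innerBdry Q) n) := by
  have measurable_start : Measurable fun ξ => loopStart (stoppedWalk D ξ) i :=
    (measurable_loopStart i).comp (measurable_stoppedWalk D)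
  rw [← tsum_measure_preimage_inter _ _ measurable_start,
    ← tsum_measure_preimage_inter _ (firstHitEvent D (innerBdry Q) n) measurable_start,
    ← ENNReal.tsum_mul_left]
  exact ENNReal.tsum_le_tsum fun u =>
    stepsLaw_loopStart_loopLength_firstHit_le hQD h0 hB hi u k

lemma setLIntegral_loopLength_add_one_le (hQD : Q ⊆ D) (h0 : 0 ∈ Q) (hB : bubble d ≠ ∞)
    (hi : i ≤ n) :
    ∫⁻ ξ in firstHitEvent D (innerBdry Q) n, (loopLength (stoppedWalk D ξ) i + 1 : ℝ≥0∞)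
        ∂stepsLaw d ≤ bubble d * stepsLaw d (firstHitEvent D (innerBdry Q) n) := by
  have measurable_length : Measurable fun ξ => loopLength (stoppedWalk D ξ) i :=
    (measurable_loopLength i).comp (measurable_stoppedWalk D)
  rw [setLIntegral_comp_eq_tsum _ _ measurable_length fun k => (k + 1 : ℝ≥0∞),
    bubble, ← ENNReal.tsum_mul_right]
  refine ENNReal.tsum_le_tsum fun k => ?_
  rw [mul_assoc]
  gcongr
  exact stepsLaw_loopLength_firstHit_le hQD h0 hB hi k

lemma setLIntegral_leTime_add_one_le (hQD : Q ⊆ D) (h0 : 0 ∈ Q) (hB : bubble d ≠ ∞) (n : ℕ) :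
    ∫⁻ ξ in firstHitEvent D (innerBdry Q) n, (leTime (stoppedWalk D ξ) n + 1 : ℝ≥0∞)
        ∂stepsLaw d ≤ (n + 1) * bubble d * stepsLaw d (firstHitEvent D (innerBdry Q) n) := by
  have measurable_length (i : ℕ) :
      Measurable fun ξ => (loopLength (stoppedWalk D ξ) i + 1 : ℝ≥0∞) :=
    (measurable_of_countable fun k : ℕ => (k + 1 : ℝ≥0∞)).comp
      ((measurable_loopLength i).comp (measurable_stoppedWalk D))
  have split : ∀ᵐ ξ ∂(stepsLaw d).restrict (firstHitEvent D (innerBdry Q) n),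
      (leTime (stoppedWalk D ξ) n + 1 : ℝ≥0∞) =
        ∑ i ∈ Finset.range (n + 1), (loopLength (stoppedWalk D ξ) i + 1 : ℝ≥0∞) := by
    filter_upwards [ae_restrict_mem (measurableSet_firstHitEvent D (innerBdry Q) n),
      ae_restrict_of_ae (ae_tendsto_walk_cofinite hB)] with ξ hξ hω
    exact_mod_cast (hasLoopsUpTo_stoppedWalk hQD h0 hω hξ).leTime_add_one_eq_sum
  rw [lintegral_congr_ae split, lintegral_finsetSum _ fun i _ => measurable_length i]
  calc _ ≤ ∑ _i ∈ Finset.range (n + 1),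
        bubble d * stepsLaw d (firstHitEvent D (innerBdry Q) n) :=
        Finset.sum_le_sum fun i hi => setLIntegral_loopLength_add_one_le hQD h0 hB
          (Nat.lt_succ_iff.1 (Finset.mem_range.1 hi))
    _ = _ := by
        rw [Finset.sum_const, Finset.card_range, nsmul_eq_mul, Nat.cast_succ, mul_assoc]

end LoopLaw

section FirstHitTime

variable [NeZero d] {D Q : Set (V d)} {n : ℕ}

lemma stepsLaw_firstHitEvent_le (hQD : Q ⊆ D) (h0 : 0 ∈ Q) (hB : bubble d ≠ ∞) (n : ℕ) :
    stepsLaw d (firstHitEvent D (innerBdry Q) n) ≤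
      2 * stepsLaw d (firstHitEvent D (innerBdry Q) n ∩
        {ξ | (leTime (stoppedWalk D ξ) n + 1 : ℝ≥0∞) ≤ 2 * ((n + 1) * bubble d)}) := by
  have measurable_time : Measurable fun ξ => (leTime (stoppedWalk D ξ) n + 1 : ℝ≥0∞) :=
    (measurable_of_countable fun t : ℕ => (t + 1 : ℝ≥0∞)).comp
      ((measurable_leTime n).comp (measurable_stoppedWalk D))
  exact measure_le_two_mul_of_setLIntegral_le (measure_ne_top _ _)
    (mul_ne_zero (by simp) (one_pos.trans_le one_le_bubble).ne') (by finiteness)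
    measurable_time (setLIntegral_leTime_add_one_le hQD h0 hB n)

lemma stepsLaw_firstHitEvent_le_inter (hQD : Q ⊆ D) (h0 : 0 ∈ Q) (h0' : 0 ∉ innerBdry Q)
    (hB : bubble d ≠ ∞) {x : ℝ} (hn : (n : ℝ) < x) :
    stepsLaw d (firstHitEvent D (innerBdry Q) n) ≤
      2 * stepsLaw d (firstHitEvent D (innerBdry Q) n ∩
        {ξ | ∃ j ≤ ⌊4 * (bubble d).toReal * x⌋₊, walk 0 ξ j ∈ innerBdry Q}) := by
  refine (stepsLaw_firstHitEvent_le hQD h0 hB n).trans ?_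
  gcongr 2 * ?_
  refine measure_mono_ae ?_
  filter_upwards [ae_tendsto_walk_cofinite hB] with ξ hω ⟨hξ, htime⟩
  refine ⟨hξ, leTime (stoppedWalk D ξ) n, Nat.le_floor ?_,
    walk_leTime_mem_of_mem_firstHitEvent (fun y hy => hQD hy.1) hξ⟩
  have one_le : (1 : ℝ) ≤ n := by exact_mod_cast pos_of_mem_firstHitEvent hQD h0 h0' hω hξ
  have time_le : (leTime (stoppedWalk D ξ) n + 1 : ℝ) ≤ 2 * ((n + 1) * (bubble d).toReal) := by
    simpa [ENNReal.toReal_add] using ENNReal.toReal_mono (by finiteness) htime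
  nlinarith [ENNReal.toReal_nonneg (a := bubble d)]

lemma stepsLaw_iUnion_firstHitEvent_le (hQD : Q ⊆ D) (h0 : 0 ∈ Q) (h0' : 0 ∉ innerBdry Q)
    (hB : bubble d ≠ ∞) (x : ℝ) :
    stepsLaw d (⋃ n ∈ {n : ℕ | (n : ℝ) < x}, firstHitEvent D (innerBdry Q) n) ≤
      2 * stepsLaw d {ξ | ∃ j ≤ ⌊4 * (bubble d).toReal * x⌋₊, walk 0 ξ j ∈ innerBdry Q} := by
  set E := firstHitEvent D (innerBdry Q)
  set F := {ξ : ℕ → Step d | ∃ j ≤ ⌊4 * (bubble d).toReal * x⌋₊, walk 0 ξ j ∈ innerBdry Q}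
  calc stepsLaw d (⋃ n ∈ {n : ℕ | (n : ℝ) < x}, E n)
      ≤ ∑' n : {n : ℕ | (n : ℝ) < x}, stepsLaw d (E n) :=
        measure_biUnion_le _ (Set.to_countable _) _
    _ ≤ ∑' n : {n : ℕ | (n : ℝ) < x}, 2 * stepsLaw d (E n ∩ F) :=
        ENNReal.tsum_le_tsum fun n => stepsLaw_firstHitEvent_le_inter hQD h0 h0' hB n.2
    _ = 2 * stepsLaw d (⋃ n : {n : ℕ | (n : ℝ) < x}, E n ∩ F) := by
        rw [ENNReal.tsum_mul_left, measure_iUnion]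
        · exact fun m n hmn => ((disjoint_firstHitEvent D _) (Subtype.coe_ne_coe.2 hmn)).mono
            Set.inter_subset_left Set.inter_subset_left
        · exact fun n => (measurableSet_firstHitEvent D _ n).inter
            (measurableSet_exists_walk_mem 0 _ _)
    _ ≤ 2 * stepsLaw d F := by
        gcongr
        exact Set.iUnion_subset fun n => Set.inter_subset_right

lemma stepsLaw_hitIdx_lerw_lt_le (hQ : Q.Finite) (hQD : Q ⊆ D) (h0 : 0 ∈ Q)
    (h0' : 0 ∉ innerBdry Q) (hB : bubble d ≠ ∞) (x : ℝ) :
    stepsLaw d {ξ | (hitIdx (innerBdry Q) (lerw D (walk 0 ξ)) : ℝ) < x} ≤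
      2 * stepsLaw d {ξ | ∃ j ≤ ⌊4 * (bubble d).toReal * x⌋₊, walk 0 ξ j ∈ innerBdry Q} := by
  refine le_trans (measure_mono_ae ?_) (stepsLaw_iUnion_firstHitEvent_le hQD h0 h0' hB x)
  filter_upwards [ae_tendsto_walk_cofinite hB] with ξ hω hx
  exact Set.mem_biUnion hx (isLeast_hitIdx
    (exists_lerw_mem_innerBdry hQ hQD (by rwa [walk_zero]) (adj_walk 0 ξ) hω))

end FirstHitTime

/-! ### Cubes -/

lemma finite_cube (x : V d) (r : ℕ) : (cube x r).Finite := by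
  refine (Set.Finite.pi' fun i => Set.finite_Icc (x i - r) (x i + r)).subset fun y hy i => ?_
  have := abs_le.1 (hy i)
  constructor <;> linarith

lemma cube_subset_cube (x : V d) {r s : ℕ} (h : r ≤ s) : cube x r ⊆ cube x s :=
  fun _ hy i => (hy i).trans (by exact_mod_cast h)

lemma mem_cube_self (x : V d) (r : ℕ) : x ∈ cube x r := fun i => by simp

lemma exists_le_abs_sub_of_mem_innerBdry_cube {x y : V d} {r : ℕ} (hy : y ∈ innerBdry (cube x r)) :
    ∃ i, (r : ℤ) ≤ |y i - x i| := by
  obtain ⟨-, z, hadj, hz⟩ := hy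
  by_contra! interior
  refine hz fun i => ?_
  have : |y i - z i| ≤ 1 :=
    hadj ▸ Finset.single_le_sum (f := fun i => |y i - z i|) (fun _ _ => abs_nonneg _)
      (Finset.mem_univ i)
  have := interior i
  have := abs_sub_le (z i) (y i) (x i)
  have := abs_sub_comm (y i) (z i)
  omega

/-! ### The lower tail -/

-- `θ = (4 B lam N)⁻¹` minimises the exponent `-θ N + 4 B lam N² θ² / 2`.
lemma exists_exp_mul_cosh_pow_le {B N lam : ℝ} (hB : 0 < B) (hN : 0 < N) (hlam : 0 < lam) :
    ∃ θ, 0 ≤ θ ∧ Real.exp (-(θ * N)) * Real.cosh θ ^ ⌊4 * B * (lam * N ^ 2)⌋₊ ≤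
      Real.exp (-(1 / (8 * B)) * lam⁻¹) := by
  set t := ⌊4 * B * (lam * N ^ 2)⌋₊
  set θ := 1 / (4 * B * lam * N)
  have cosh_pow_le : Real.cosh θ ^ t ≤ Real.exp (t * (θ ^ 2 / 2)) := by
    rw [Real.exp_nat_mul]
    exact pow_le_pow_left₀ (Real.cosh_pos _).le (Real.cosh_le_exp_half_sq θ) t
  refine ⟨θ, by positivity, ?_⟩
  calc Real.exp (-(θ * N)) * Real.cosh θ ^ t
      ≤ Real.exp (-(θ * N)) * Real.exp (t * (θ ^ 2 / 2)) := by gcongr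
    _ = Real.exp (-(θ * N) + t * (θ ^ 2 / 2)) := (Real.exp_add _ _).symm
    _ ≤ Real.exp (-(θ * N) + 4 * B * (lam * N ^ 2) * (θ ^ 2 / 2)) := by
      gcongr
      exact Nat.floor_le (by positivity)
    _ = Real.exp (-(1 / (8 * B)) * lam⁻¹) := by
      congr 1
      simp only [θ]
      field_simp
      norm_num

lemma stepsLaw_hitIdx_lerw_cube_lt_le [NeZero d] (hB : bubble d ≠ ∞) {N : ℕ} (hN : 1 ≤ N)
    {D : Set (V d)} (hD : cube 0 N ⊆ D) {lam : ℝ} (hlam : 0 < lam) :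
    stepsLaw d {ξ | (hitIdx (innerBdry (cube 0 N)) (lerw D (walk 0 ξ)) : ℝ) < lam * N ^ 2} ≤
      ENNReal.ofReal (4 * d * Real.exp (-(1 / (8 * (bubble d).toReal)) * lam⁻¹)) := by
  have bubble_pos : 0 < (bubble d).toReal :=
    ENNReal.toReal_pos (one_pos.trans_le one_le_bubble).ne' hB
  have far (y : V d) (hy : y ∈ innerBdry (cube 0 N)) : ∃ i, (N : ℤ) ≤ |y i| := by
    simpa using exists_le_abs_sub_of_mem_innerBdry_cube hy
  have zero_notMem : (0 : V d) ∉ innerBdry (cube 0 N) := fun h => by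
    obtain ⟨i, hi⟩ := far 0 h
    rw [Pi.zero_apply, abs_zero] at hi
    omega
  obtain ⟨θ, hθ, hexp⟩ := exists_exp_mul_cosh_pow_le bubble_pos (Nat.cast_pos.2 hN) hlam
  calc _ ≤ 2 * stepsLaw d {ξ | ∃ j ≤ ⌊4 * (bubble d).toReal * (lam * N ^ 2)⌋₊,
          walk 0 ξ j ∈ innerBdry (cube 0 N)} :=
        stepsLaw_hitIdx_lerw_lt_le (finite_cube 0 N) hD (mem_cube_self 0 N) zero_notMem hB _
    _ ≤ 2 * stepsLaw d {ξ | ∃ j ≤ ⌊4 * (bubble d).toReal * (lam * N ^ 2)⌋₊,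
          ∃ i, (N : ℤ) ≤ |walk 0 ξ j i|} := by
        gcongr 2 * stepsLaw d ?_
        rintro ξ ⟨j, hj, hmem⟩
        exact ⟨j, hj, far _ hmem⟩
    _ ≤ 2 * ENNReal.ofReal (2 * d * Real.exp (-(θ * N)) *
          Real.cosh θ ^ ⌊4 * (bubble d).toReal * (lam * N ^ 2)⌋₊) := by
        gcongr
        exact stepsLaw_exists_le_abs_walk_le hθ N _
    _ ≤ _ := by
        rw [← ENNReal.ofReal_ofNat 2, ← ENNReal.ofReal_mul zero_le_two]
        refine ENNReal.ofReal_le_ofReal ?_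
        calc _ = 4 * d * (Real.exp (-(θ * N)) *
              Real.cosh θ ^ ⌊4 * (bubble d).toReal * (lam * N ^ 2)⌋₊) := by ring
          _ ≤ _ := by gcongr

theorem lerw_length_lower_tail_general (hd : 5 ≤ d) :
    ∃ C c : ℝ, 0 < C ∧ 0 < c ∧
      ∀ (N : ℕ) (D : Set (V d)), 1 ≤ N → cube 0 N ⊆ D →
      ∀ μ : Measure (ℕ → V d), IsSRWLaw μ 0 →
      ∀ lam : ℝ, 0 < lam →
        (μ { ω | ((hitIdx (innerBdry (cube 0 N)) (lerw D ω) : ℝ)) < lam * (N : ℝ) ^ 2 }).toReal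
          ≤ C * Real.exp (-c * lam⁻¹) := by
  have : NeZero d := ⟨by omega⟩
  have hB : bubble d ≠ ∞ := bubble_ne_top hd
  have bubble_pos : 0 < (bubble d).toReal :=
    ENNReal.toReal_pos (one_pos.trans_le one_le_bubble).ne' hB
  refine ⟨4 * d, 1 / (8 * (bubble d).toReal), by positivity, by positivity, ?_⟩
  intro N D hN hD μ hμ lam hlam
  have measurable_length : Measurable fun ω => (hitIdx (innerBdry (cube 0 N)) (lerw D ω) : ℝ) :=
    measurable_from_nat.comp
      ((measurable_hitIdx _).comp (measurable_infLoopErase.comp (measurable_stopAt D)))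
  rw [hμ.eq_map_walk, Measure.map_apply (measurable_walk 0)
    (measurableSet_lt measurable_length measurable_const)]
  exact ENNReal.toReal_le_of_le_ofReal (by positivity)
    (stepsLaw_hitIdx_lerw_cube_lt_le hB hN hD hlam)

/-- Proposition 3.10 (lower tail of the LERW length).  Let `d ≥ 5`, `N ≥ 1`,
`Q_{4N} ⊆ D ⊆ ℤ^d`.  Let `L` be the loop erasure of SRW from `0` stopped at its first
exit from `D`, and `M_N` the number of steps of `L` until its first hit of `∂ᵢQ_N`.
Then there are `C, c > 0` depending only on `d` such that for all `λ > 0`,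
`P( M_N < λ N² ) ≤ C exp( -c λ⁻¹ )`. -/
theorem lerw_length_lower_tail :
    ∀ d : ℕ, 5 ≤ d → ∃ C c : ℝ, 0 < C ∧ 0 < c ∧
      ∀ (N : ℕ) (D : Set (V d)), 1 ≤ N → cube 0 (4 * N) ⊆ D →
      ∀ μ : Measure (ℕ → V d), IsSRWLaw μ 0 →
      ∀ lam : ℝ, 0 < lam →
        (μ { ω | ((hitIdx (innerBdry (cube 0 N)) (lerw D ω) : ℝ)) < lam * (N : ℝ) ^ 2 }).toReal
          ≤ C * Real.exp (-c * lam⁻¹) := by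
  intro d hd
  obtain ⟨C, c, hC, hc, bound⟩ := lerw_length_lower_tail_general hd
  exact ⟨C, c, hC, hc, fun N D hN hD => bound N D hN ((cube_subset_cube 0 (by omega)).trans hD)⟩

end USFPaper
end

section
/- Let d ≥ 5. For y, x ∈ Z^d and n ≥ 1, let F(y,x,n) be the event that simple random walk S^y started at y hits x in finite time and the chronological loop erasure of S^y stopped at its first hit of x has at most n steps. Then there exist constants C, c > 0 depending only on d such that for every x, y ∈ Z^d and n ≥ 1, P( F(y,x,n) ) ≤ C (1 + |x-y|)^{2-d} exp( -c |x-y|² / n ), where |x-y| denotes Euclidean distance. -/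
open MeasureTheory
open scoped ENNReal Classical

namespace USFPaper

variable {d : ℕ}

/-- Auxiliary function for chronological loop erasure of a finite path:
`leAux acc l` processes the points of `l` one by one, erasing a loop each time the
next point already occurs in the accumulated path. -/
def leAux : List (V d) → List (V d) → List (V d)
  | acc, [] => acc
  | acc, x :: xs =>
    if x ∈ acc then leAux (acc.takeWhile (· ≠ x) ++ [x]) xs
    else leAux (acc ++ [x]) xs

/-- Chronological loop erasure of a finite path. -/
def loopErase (l : List (V d)) : List (V d) := leAux [] l

/-- The walk as a finite path, stopped at its first hit of the point `x`. -/
noncomputable def stoppedAtPointList (x : V d) (ω : ℕ → V d) : List (V d) :=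
  (List.range (hitIdx ({x} : Set (V d)) ω + 1)).map ω

/-!
Split a walk from `y` to `x` at its last visit to `y`. The loop at `y` contributes a single vertex
to the loop erasure and the rest of the walk avoids `y`, so a loop erasure with `M` vertices
corresponds to at most `M` loops. Damping every vertex by `exp (-t)` lowers the generating function
of the loops at a point by a factor of at most `exp ((1 + κ) t)`, where `κ` bounds
`∑ j * p_j(0, 0)`; this sum is finite precisely because `d ≥ 5`. Hence the probability in question
is at most `exp ((1 + κ) t M)` times the Green's function damped by `exp (-t)` per step. For
`t = a²` and `r = |x - y|`, the latter is at most a constant times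
`(1 + r)^(2 - d) * exp (-a r / 2)`, and the choice `a = θ r / n` with `θ` small proves the theorem.

The required off-diagonal bounds on the heat kernel come from an explicit supersolution of the heat
equation: a multinomial mixture of products of Gaussian profiles.
-/

section MultinomialMean

variable {ι : Type*} [Fintype ι] [DecidableEq ι]

/-- The mean of `F N`, where `N` counts the outcomes of `j` independent uniform draws from `ι`,
by recursion on the outcome of the first draw. -/
noncomputable def multinomialMean : ℕ → ((ι → ℕ) → ℝ) → ℝ
  | 0, F => F 0
  | j + 1, F => (Fintype.card ι : ℝ)⁻¹ *
      ∑ i, multinomialMean j fun n => F (n + Pi.single i 1)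

lemma multinomialMean_mono {j : ℕ} {F G : (ι → ℕ) → ℝ} (h : ∀ n, (∀ i, n i ≤ j) → F n ≤ G n) :
    multinomialMean j F ≤ multinomialMean j G := by
  induction j generalizing F G with
  | zero => exact h 0 (by simp)
  | succ j ih =>
    unfold multinomialMean
    gcongr with i
    refine ih fun n hn => h _ fun k => ?_
    have hk : (Pi.single i 1 : ι → ℕ) k ≤ 1 := by
      rcases eq_or_ne k i with rfl | hki <;> simp [*]
    simpa using add_le_add (hn k) hk

lemma multinomialMean_add (j : ℕ) (F G : (ι → ℕ) → ℝ) :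
    multinomialMean j (fun n => F n + G n) = multinomialMean j F + multinomialMean j G := by
  induction j generalizing F G with
  | zero => rfl
  | succ j ih => simp only [multinomialMean, ih, Finset.sum_add_distrib, mul_add]

lemma multinomialMean_const_mul (j : ℕ) (c : ℝ) (F : (ι → ℕ) → ℝ) :
    multinomialMean j (fun n => c * F n) = c * multinomialMean j F := by
  induction j generalizing F with
  | zero => rfl
  | succ j ih => simp only [multinomialMean, ih, ← Finset.mul_sum, mul_left_comm]

lemma multinomialMean_nonneg (j : ℕ) {F : (ι → ℕ) → ℝ} (h : ∀ n, 0 ≤ F n) :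
    0 ≤ multinomialMean j F := by
  have zero_le := multinomialMean_mono (j := j) (F := fun n => 0 * F n) (G := F) fun n _ => by
    simpa using h n
  rwa [multinomialMean_const_mul, zero_mul] at zero_le

lemma multinomialMean_one_le (j : ℕ) : multinomialMean j (fun _ : ι → ℕ => 1) ≤ 1 := by
  induction j with
  | zero => exact le_rfl
  | succ j ih =>
    rw [multinomialMean, Finset.sum_const, Finset.card_univ, nsmul_eq_mul, ← mul_assoc]
    exact mul_le_one₀ inv_mul_le_one (multinomialMean_nonneg j fun _ => zero_le_one) ih

lemma sq_multinomialMean_le (j : ℕ) (F : (ι → ℕ) → ℝ) :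
    multinomialMean j F ^ 2 ≤ multinomialMean j fun n => F n ^ 2 := by
  induction j generalizing F with
  | zero => exact le_rfl
  | succ j ih =>
    let m (i : ι) : ℝ := multinomialMean j fun n => F (n + Pi.single i 1)
    have cauchy_schwarz : (∑ i, m i) ^ 2 ≤ Fintype.card ι * ∑ i, m i ^ 2 := by
      simpa using sq_sum_le_card_mul_sum_sq (s := Finset.univ) (f := m)
    calc ((Fintype.card ι : ℝ)⁻¹ * ∑ i, m i) ^ 2
        ≤ (Fintype.card ι : ℝ)⁻¹ ^ 2 * (Fintype.card ι * ∑ i, m i ^ 2) := by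
          rw [mul_pow]; gcongr
      _ = (Fintype.card ι : ℝ)⁻¹ * ∑ i, m i ^ 2 := by
          rcases eq_or_ne (Fintype.card ι : ℝ) 0 with h | h
          · simp [h]
          · field_simp
      _ ≤ _ := by
          unfold multinomialMean
          gcongr with i
          exact ih _

lemma multinomialMean_succ_apply_mul (i : ι) (j : ℕ) (g : (ι → ℕ) → ℝ) :
    multinomialMean (j + 1) (fun n => (n i : ℝ) * g n) =
      (Fintype.card ι : ℝ)⁻¹ *
        (∑ k, multinomialMean j (fun n => (n i : ℝ) * g (n + Pi.single k 1)) +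
          multinomialMean j fun n => g (n + Pi.single i 1)) := by
  have first_draw (k : ι) :
      multinomialMean j (fun n => ((n + Pi.single k 1 : ι → ℕ) i : ℝ) * g (n + Pi.single k 1)) =
        multinomialMean j (fun n => (n i : ℝ) * g (n + Pi.single k 1)) +
          if k = i then multinomialMean j (fun n => g (n + Pi.single i 1)) else 0 := by
    split_ifs with hk
    · subst hk
      rw [← multinomialMean_add]
      congr 1
      ext n
      simp [add_mul]
    · rw [add_zero]
      congr 1
      ext n
      simp [Pi.single_eq_of_ne' hk]
  simp only [multinomialMean, first_draw, Finset.sum_add_distrib, Finset.sum_ite_eq',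
    Finset.mem_univ, if_true]

lemma multinomialMean_apply_mul (i : ι) (j : ℕ) (g : (ι → ℕ) → ℝ) :
    multinomialMean (j + 1) (fun n => (n i : ℝ) * g n) =
      (j + 1) / Fintype.card ι * multinomialMean j fun n => g (n + Pi.single i 1) := by
  induction j generalizing g with
  | zero =>
    rw [multinomialMean_succ_apply_mul]
    simp [multinomialMean, div_eq_mul_inv]
  | succ j ih =>
    have : Nonempty ι := ⟨i⟩
    rw [multinomialMean_succ_apply_mul]
    simp only [ih fun n => g (n + Pi.single _ 1), ← Finset.mul_sum]
    have swap : multinomialMean (j + 1) (fun n => g (n + Pi.single i 1)) =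
        (Fintype.card ι : ℝ)⁻¹ *
          ∑ k, multinomialMean j fun n => g (n + Pi.single i 1 + Pi.single k 1) := by
      simp only [multinomialMean, add_right_comm]
    rw [swap]
    push_cast
    field_simp

lemma multinomialMean_div_apply_le (i : ι) (j : ℕ) {g : (ι → ℕ) → ℝ} (hg : ∀ n, 0 ≤ g n)
    (hgi : ∀ n, g (n + Pi.single i 1) = g n) :
    multinomialMean j (fun n => ((n i : ℝ) + 1)⁻¹ * g n) ≤
      Fintype.card ι / (j + 1) * multinomialMean (j + 1) g := by
  have : Nonempty ι := ⟨i⟩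
  have size_bias := multinomialMean_apply_mul i j fun n => (n i : ℝ)⁻¹ * g n
  simp only [Pi.add_apply, Pi.single_eq_same, Nat.cast_add, Nat.cast_one, hgi] at size_bias
  calc multinomialMean j (fun n => ((n i : ℝ) + 1)⁻¹ * g n)
      = Fintype.card ι / (j + 1) *
          multinomialMean (j + 1) fun n => (n i : ℝ) * ((n i : ℝ)⁻¹ * g n) := by
        rw [size_bias]; field_simp
    _ ≤ _ := by
        gcongr
        refine multinomialMean_mono fun n _ => ?_
        rw [← mul_assoc]
        exact mul_le_of_le_one_left (hg n) mul_inv_le_one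

lemma multinomialMean_prod_inv_le (S : Finset ι) (j : ℕ) :
    multinomialMean j (fun n => ∏ i ∈ S, ((n i : ℝ) + 1)⁻¹) ≤
      ((Fintype.card ι : ℝ) / (j + 1)) ^ S.card := by
  induction S using Finset.induction_on generalizing j with
  | empty => simpa using multinomialMean_one_le j
  | insert i S hi ih =>
    simp only [Finset.prod_insert hi]
    have prod_shift (n : ι → ℕ) :
        ∏ k ∈ S, (((n + Pi.single i 1 : ι → ℕ) k : ℝ) + 1)⁻¹ = ∏ k ∈ S, ((n k : ℝ) + 1)⁻¹ :=
      Finset.prod_congr rfl fun k hk => by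
        simp [Pi.single_eq_of_ne (ne_of_mem_of_not_mem hk hi)]
    calc multinomialMean j (fun n => ((n i : ℝ) + 1)⁻¹ * ∏ k ∈ S, ((n k : ℝ) + 1)⁻¹)
        ≤ Fintype.card ι / (j + 1) *
            multinomialMean (j + 1) fun n => ∏ k ∈ S, ((n k : ℝ) + 1)⁻¹ :=
          multinomialMean_div_apply_le i j (fun n => by positivity) prod_shift
      _ ≤ Fintype.card ι / (j + 1) * (Fintype.card ι / (j + 1)) ^ S.card := by
          gcongr
          refine (ih (j + 1)).trans ?_
          push_cast
          gcongr
          linarith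
      _ = _ := by rw [Finset.card_insert_of_notMem hi, pow_succ']

lemma multinomialMean_prod_inv_sqrt_le (j : ℕ) :
    multinomialMean j (fun n : ι → ℕ => ∏ i, (√((n i : ℝ) + 1))⁻¹) ≤
      √(Fintype.card ι) ^ Fintype.card ι * (√((j : ℝ) + 1))⁻¹ ^ Fintype.card ι := by
  refine le_of_sq_le_sq ((sq_multinomialMean_le j _).trans ?_) (by positivity)
  have prod_sq (n : ι → ℕ) :
      (∏ i, (√((n i : ℝ) + 1))⁻¹) ^ 2 = ∏ i, ((n i : ℝ) + 1)⁻¹ := by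
    rw [← Finset.prod_pow]
    exact Finset.prod_congr rfl fun i _ => by rw [inv_pow, Real.sq_sqrt (by positivity)]
  simp only [prod_sq]
  refine (multinomialMean_prod_inv_le Finset.univ j).trans_eq ?_
  rw [Finset.card_univ, ← mul_pow, pow_right_comm, mul_pow, inv_pow,
    Real.sq_sqrt (by positivity), Real.sq_sqrt (by positivity), div_eq_mul_inv]

end MultinomialMean

section GaussianProfile

/-- The precision (inverse variance) of the Gaussian bounding the `k`-step one-dimensional heat
kernel. The decrement `v ^ 2` is forced by the bound `cosh (v * x) ≤ exp ((v * x) ^ 2 / 2)`. -/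
noncomputable def precision : ℕ → ℝ
  | 0 => 1 / 2
  | k + 1 => precision k - precision k ^ 2

lemma precision_mem_Icc (k : ℕ) :
    precision k ∈ Set.Icc (1 / (2 * ((k : ℝ) + 1))) (1 / ((k : ℝ) + 2)) := by
  induction k with
  | zero => norm_num [precision]
  | succ k ih =>
    obtain ⟨lower, upper⟩ := ih
    have hk : (0 : ℝ) ≤ k := k.cast_nonneg
    have le_half : 1 / ((k : ℝ) + 2) ≤ 1 / 2 := by gcongr; linarith
    have step_mono {a b : ℝ} (hab : a ≤ b) (hb : b ≤ 1 / 2) : a - a ^ 2 ≤ b - b ^ 2 := by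
      nlinarith
    rw [precision]
    push_cast
    constructor
    · refine le_trans ?_ (step_mono lower (upper.trans le_half))
      rw [div_sub' (by positivity), div_le_div_iff₀ (by positivity) (by positivity)]
      field_simp
      nlinarith
    · refine (step_mono upper le_half).trans ?_
      rw [div_pow, one_pow, div_sub_div _ _ (by positivity) (by positivity),
        div_le_div_iff₀ (by positivity) (by positivity)]
      nlinarith [pow_nonneg hk 3, pow_nonneg hk 2]

lemma precision_pos (k : ℕ) : 0 < precision k :=
  lt_of_lt_of_le (by positivity) (precision_mem_Icc k).1

lemma precision_le_half (k : ℕ) : precision k ≤ 1 / 2 :=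
  (precision_mem_Icc k).2.trans <| by gcongr; linarith [(k.cast_nonneg : (0 : ℝ) ≤ k)]

lemma exp_neg_sub_sq_le_one_sub {v : ℝ} (h0 : 0 ≤ v) (h1 : v ≤ 1 / 2) :
    Real.exp (-v - v ^ 2) ≤ 1 - v := by
  have quadratic := Real.quadratic_le_exp_of_nonneg (x := v + v ^ 2) (by positivity)
  have gap_nonneg : 0 ≤ v ^ 2 * (1 - v - v ^ 2 - v ^ 3) := by
    have : v ^ 2 ≤ 1 / 4 := by nlinarith
    have : v ^ 3 ≤ 1 / 8 := by nlinarith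
    exact mul_nonneg (sq_nonneg v) (by linarith)
  rw [show -v - v ^ 2 = -(v + v ^ 2) by ring, Real.exp_neg,
    inv_le_iff_one_le_mul₀ (Real.exp_pos _)]
  calc (1 : ℝ) ≤ 1 + v ^ 2 * (1 - v - v ^ 2 - v ^ 3) / 2 := by linarith
    _ = (1 - v) * (1 + (v + v ^ 2) + (v + v ^ 2) ^ 2 / 2) := by ring
    _ ≤ (1 - v) * Real.exp (v + v ^ 2) := by gcongr; linarith

/-- A Gaussian of precision `v`. The factor `√v` gives the correct decay of the heat kernel, the
extra `exp (-v / 2)` makes `gaussianProfile_average_le` hold without loss, and the constants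
normalize the value at `v = 1 / 2`, `x = 0` to `1`. -/
noncomputable def gaussianProfile (v x : ℝ) : ℝ := √(2 * v) * Real.exp (1 / 4 - v * (x ^ 2 + 1) / 2)

lemma gaussianProfile_nonneg (v x : ℝ) : 0 ≤ gaussianProfile v x := by
  unfold gaussianProfile; positivity

lemma gaussianProfile_precision_zero : gaussianProfile (precision 0) 0 = 1 := by
  norm_num [gaussianProfile, precision]

lemma gaussianProfile_average_eq (v x : ℝ) :
    (gaussianProfile v (x - 1) + gaussianProfile v (x + 1)) / 2 =
      √(2 * v) * (Real.exp (1 / 4 - v * (x ^ 2 + 2) / 2) * Real.cosh (v * x)) := by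
  have left_exp : Real.exp (1 / 4 - v * ((x - 1) ^ 2 + 1) / 2) =
      Real.exp (1 / 4 - v * (x ^ 2 + 2) / 2) * Real.exp (v * x) := by
    rw [← Real.exp_add]; ring_nf
  have right_exp : Real.exp (1 / 4 - v * ((x + 1) ^ 2 + 1) / 2) =
      Real.exp (1 / 4 - v * (x ^ 2 + 2) / 2) * Real.exp (-(v * x)) := by
    rw [← Real.exp_add]; ring_nf
  rw [gaussianProfile, gaussianProfile, left_exp, right_exp, Real.cosh_eq]
  ring

lemma gaussianProfile_average_le {v : ℝ} (h0 : 0 ≤ v) (h1 : v ≤ 1 / 2) (x : ℝ) :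
    (gaussianProfile v (x - 1) + gaussianProfile v (x + 1)) / 2 ≤
      gaussianProfile (v - v ^ 2) x := by
  have sqrt_step : √(2 * v) * Real.exp ((-v - v ^ 2) / 2) ≤ √(2 * (v - v ^ 2)) := by
    rw [show 2 * (v - v ^ 2) = 2 * v * (1 - v) by ring,
      Real.sqrt_mul (x := 2 * v) (by positivity), Real.exp_half]
    exact mul_le_mul_of_nonneg_left (Real.sqrt_le_sqrt (exp_neg_sub_sq_le_one_sub h0 h1))
      (Real.sqrt_nonneg _)
  calc _ = √(2 * v) * (Real.exp (1 / 4 - v * (x ^ 2 + 2) / 2) * Real.cosh (v * x)) :=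
        gaussianProfile_average_eq v x
    _ ≤ √(2 * v) * (Real.exp (1 / 4 - v * (x ^ 2 + 2) / 2) * Real.exp ((v * x) ^ 2 / 2)) := by
        gcongr
        exact Real.cosh_le_exp_half_sq _
    _ = √(2 * v) * Real.exp ((-v - v ^ 2) / 2) *
          Real.exp (1 / 4 - (v - v ^ 2) * (x ^ 2 + 1) / 2) := by
        rw [mul_assoc, ← Real.exp_add, ← Real.exp_add]; ring_nf
    _ ≤ _ := by rw [gaussianProfile]; gcongr

lemma gaussianProfile_precision_le (k : ℕ) (x : ℝ) :
    gaussianProfile (precision k) x ≤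
      2 * (√((k : ℝ) + 1))⁻¹ * Real.exp (-(x ^ 2 / (4 * ((k : ℝ) + 1)))) := by
  obtain ⟨lower, upper⟩ := precision_mem_Icc k
  have hv := precision_pos k
  have exp_quarter : Real.exp (1 / 4) ≤ √2 := by
    rw [show (1 / 4 : ℝ) = 1 / 2 / 2 by norm_num, Real.exp_half]
    refine Real.sqrt_le_sqrt ?_
    rw [Real.exp_half, Real.sqrt_le_left (by norm_num)]
    linarith [Real.exp_one_lt_three]
  have exponent_le : 1 / 4 - precision k * (x ^ 2 + 1) / 2 ≤
      1 / 4 + -(x ^ 2 / (4 * ((k : ℝ) + 1))) := by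
    have : 1 / (2 * ((k : ℝ) + 1)) * x ^ 2 ≤ precision k * x ^ 2 := by gcongr
    have : x ^ 2 / (4 * ((k : ℝ) + 1)) = 1 / (2 * ((k : ℝ) + 1)) * x ^ 2 / 2 := by
      field_simp; norm_num
    linarith
  have sqrt_le : √(2 * precision k) ≤ √2 * (√((k : ℝ) + 1))⁻¹ := by
    rw [Real.sqrt_mul (by norm_num), ← Real.sqrt_inv]
    gcongr
    exact upper.trans (by rw [one_div]; gcongr; norm_num)
  calc gaussianProfile (precision k) x
      ≤ √2 * (√((k : ℝ) + 1))⁻¹ * (√2 * Real.exp (-(x ^ 2 / (4 * ((k : ℝ) + 1))))) := by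
        refine mul_le_mul sqrt_le ((Real.exp_le_exp.2 exponent_le).trans ?_)
          (Real.exp_pos _).le (by positivity)
        rw [Real.exp_add]
        gcongr
    _ = √2 * √2 * (√((k : ℝ) + 1))⁻¹ * Real.exp (-(x ^ 2 / (4 * ((k : ℝ) + 1)))) := by ring
    _ = _ := by rw [Real.mul_self_sqrt (by norm_num)]

end GaussianProfile

section GaussianMixture

variable {ι : Type*} [Fintype ι] [DecidableEq ι]

/-- A supersolution of the heat equation of simple random walk on `ℤ^ι`. Given the numbers of
steps in each coordinate direction, which are multinomial, the coordinates of the walk are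
independent one-dimensional walks, whose heat kernels are replaced by Gaussian profiles. -/
noncomputable def gaussianMixture (j : ℕ) (x : ι → ℤ) : ℝ :=
  multinomialMean j fun n => ∏ i, gaussianProfile (precision (n i)) (x i)

lemma gaussianMixture_nonneg (j : ℕ) (x : ι → ℤ) : 0 ≤ gaussianMixture j x :=
  multinomialMean_nonneg j fun _ => Finset.prod_nonneg fun _ _ => gaussianProfile_nonneg _ _

lemma gaussianMixture_zero_zero : gaussianMixture 0 (0 : ι → ℤ) = 1 := by
  simp [gaussianMixture, multinomialMean, gaussianProfile_precision_zero]

lemma prod_gaussianProfile_average_le (n : ι → ℕ) (x : ι → ℤ) (i : ι) :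
    ∏ k, gaussianProfile (precision (n k)) ((x - Pi.single i 1 : ι → ℤ) k) +
        ∏ k, gaussianProfile (precision (n k)) ((x + Pi.single i 1 : ι → ℤ) k) ≤
      2 * ∏ k, gaussianProfile (precision ((n + Pi.single i 1 : ι → ℕ) k)) (x k) := by
  simp only [← Finset.mul_prod_erase _ _ (Finset.mem_univ i)]
  have others_sub : ∏ k ∈ Finset.univ.erase i,
        gaussianProfile (precision (n k)) ((x - Pi.single i 1 : ι → ℤ) k) =
      ∏ k ∈ Finset.univ.erase i, gaussianProfile (precision (n k)) (x k) :=
    Finset.prod_congr rfl fun k hk => by simp [Finset.ne_of_mem_erase hk]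
  have others_add : ∏ k ∈ Finset.univ.erase i,
        gaussianProfile (precision (n k)) ((x + Pi.single i 1 : ι → ℤ) k) =
      ∏ k ∈ Finset.univ.erase i, gaussianProfile (precision (n k)) (x k) :=
    Finset.prod_congr rfl fun k hk => by simp [Finset.ne_of_mem_erase hk]
  have others_succ : ∏ k ∈ Finset.univ.erase i,
        gaussianProfile (precision ((n + Pi.single i 1 : ι → ℕ) k)) (x k) =
      ∏ k ∈ Finset.univ.erase i, gaussianProfile (precision (n k)) (x k) :=
    Finset.prod_congr rfl fun k hk => by simp [Finset.ne_of_mem_erase hk]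
  have average :=
    gaussianProfile_average_le (precision_pos (n i)).le (precision_le_half (n i)) (x i)
  rw [others_sub, others_add, others_succ, ← add_mul, ← mul_assoc]
  simp only [Pi.sub_apply, Pi.add_apply, Pi.single_eq_same, Int.cast_sub, Int.cast_add,
    Int.cast_one, precision]
  gcongr
  · exact Finset.prod_nonneg fun _ _ => gaussianProfile_nonneg _ _
  · linarith

lemma gaussianMixture_average_le (j : ℕ) (x : ι → ℤ) :
    (2 * (Fintype.card ι : ℝ))⁻¹ *
        ∑ i, (gaussianMixture j (x - Pi.single i 1) + gaussianMixture j (x + Pi.single i 1)) ≤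
      gaussianMixture (j + 1) x := by
  have average (i : ι) :
      gaussianMixture j (x - Pi.single i 1) + gaussianMixture j (x + Pi.single i 1) ≤
        2 * multinomialMean j fun n =>
          ∏ k, gaussianProfile (precision ((n + Pi.single i 1 : ι → ℕ) k)) (x k) := by
    rw [gaussianMixture, gaussianMixture, ← multinomialMean_add, ← multinomialMean_const_mul]
    exact multinomialMean_mono fun n _ => prod_gaussianProfile_average_le n x i
  refine (mul_le_mul_of_nonneg_left (Finset.sum_le_sum fun i _ => average i)
    (by positivity)).trans_eq ?_
  rw [← Finset.mul_sum, mul_inv, gaussianMixture, multinomialMean]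
  ring

lemma gaussianMixture_le (j : ℕ) (x : ι → ℤ) :
    gaussianMixture j x ≤ (2 * √(Fintype.card ι)) ^ Fintype.card ι *
      ((√((j : ℝ) + 1))⁻¹ ^ Fintype.card ι *
        Real.exp (-((∑ i, (x i : ℝ) ^ 2) / (4 * ((j : ℝ) + 1))))) := by
  set e := Real.exp (-((∑ i, (x i : ℝ) ^ 2) / (4 * ((j : ℝ) + 1))))
  have prod_le (n : ι → ℕ) (hn : ∀ i, n i ≤ j) :
      ∏ i, gaussianProfile (precision (n i)) (x i) ≤
        2 ^ Fintype.card ι * e * ∏ i, (√((n i : ℝ) + 1))⁻¹ :=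
    calc _ ≤ ∏ i, (2 * (√((n i : ℝ) + 1))⁻¹ *
            Real.exp (-((x i : ℝ) ^ 2 / (4 * ((j : ℝ) + 1))))) := by
          refine Finset.prod_le_prod (fun i _ => gaussianProfile_nonneg _ _) fun i _ => ?_
          refine (gaussianProfile_precision_le _ _).trans ?_
          gcongr
          exact hn i
      _ = _ := by
          rw [Finset.prod_mul_distrib, Finset.prod_mul_distrib, ← Real.exp_sum, Finset.prod_const,
            Finset.sum_neg_distrib, ← Finset.sum_div, Finset.card_univ]
          ring
  calc gaussianMixture j x
      ≤ 2 ^ Fintype.card ι * e * multinomialMean j fun n : ι → ℕ => ∏ i, (√((n i : ℝ) + 1))⁻¹ := by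
        rw [← multinomialMean_const_mul]
        exact multinomialMean_mono prod_le
    _ ≤ 2 ^ Fintype.card ι * e *
          (√(Fintype.card ι) ^ Fintype.card ι * (√((j : ℝ) + 1))⁻¹ ^ Fintype.card ι) := by
        gcongr
        exact multinomialMean_prod_inv_sqrt_le j
    _ = _ := by rw [mul_pow]; ring

end GaussianMixture

section GreenFunction

lemma sum_inv_sq_add_le {s : ℝ} (hs : 0 < s) (N : ℕ) :
    ∑ j ∈ Finset.range N, (((j : ℝ) + s) ^ 2)⁻¹ ≤ (1 + s) / s * (s⁻¹ - ((N : ℝ) + s)⁻¹) := by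
  induction N with
  | zero => simp
  | succ N ih =>
    have hN : (0 : ℝ) ≤ N := N.cast_nonneg
    have telescope : (((N : ℝ) + s) ^ 2)⁻¹ ≤
        (1 + s) / s * (((N : ℝ) + s)⁻¹ - (((N + 1 : ℕ) : ℝ) + s)⁻¹) := by
      push_cast
      rw [inv_sub_inv (by positivity) (by positivity), div_mul_div_comm,
        inv_le_iff_one_le_mul₀ (by positivity), div_mul_eq_mul_div, one_le_div (by positivity)]
      nlinarith [mul_nonneg hN (add_nonneg hN hs.le)]
    rw [Finset.sum_range_succ]
    linarith

lemma inv_sqrt_pow_mul_exp_le {d : ℕ} (hd : 0 < d) {t M : ℝ} (ht : 0 < t) (hM : 0 ≤ M) :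
    (√t)⁻¹ ^ d * Real.exp (-(M / (8 * t))) ≤ (8 * d) ^ d * (√(t + M))⁻¹ ^ d := by
  have hd1 : (1 : ℝ) ≤ d := by exact_mod_cast hd
  have sqrt_le : √(t + M) ≤ √t * (8 * d * Real.exp (M / (8 * t) / d)) := by
    have hu : 0 ≤ M / t := by positivity
    have ratio : t + M = t * (1 + M / t) := by field_simp
    rw [ratio, Real.sqrt_mul ht.le]
    gcongr
    calc √(1 + M / t) ≤ 1 + M / t := Real.sqrt_le_iff.2 ⟨by positivity, by nlinarith⟩
      _ ≤ 8 * d * (M / (8 * t) / d + 1) := by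
        have : 8 * d * (M / (8 * t) / d + 1) = M / t + 8 * d := by field_simp
        linarith
      _ ≤ _ := by gcongr; exact Real.add_one_le_exp _
  have exp_root : Real.exp (-(M / (8 * t))) = (Real.exp (M / (8 * t) / d))⁻¹ ^ d := by
    rw [← Real.exp_neg, ← Real.exp_nat_mul]
    congr 1
    field_simp
  rw [exp_root, ← mul_pow, ← mul_pow]
  refine pow_le_pow_left₀ (by positivity) ?_ d
  rw [← mul_inv, ← div_eq_mul_inv, le_div_iff₀ (by positivity), inv_mul_le_iff₀ (by positivity)]
  linarith

lemma inv_sqrt_pow_le {d : ℕ} (hd : 4 ≤ d) {t M : ℝ} (ht : 1 ≤ t) (hM : 0 ≤ M) :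
    (√(t + M))⁻¹ ^ d ≤ (√(1 + M))⁻¹ ^ (d - 4) * ((t + M) ^ 2)⁻¹ := by
  have fourth_power : (√(t + M))⁻¹ ^ 4 = ((t + M) ^ 2)⁻¹ := by
    rw [inv_pow, show 4 = 2 * 2 by norm_num, pow_mul, Real.sq_sqrt (by linarith)]
  calc (√(t + M))⁻¹ ^ d = (√(t + M))⁻¹ ^ (d - 4) * ((t + M) ^ 2)⁻¹ := by
        rw [← fourth_power, pow_sub_mul_pow _ hd]
    _ ≤ _ := by gcongr

lemma inv_sqrt_one_add_sq_pow_le {d : ℕ} (hd : 2 ≤ d) {r : ℝ} (hr : 0 ≤ r) :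
    (√(1 + r ^ 2))⁻¹ ^ (d - 2) ≤ 2 ^ (d - 2) * (1 + r) ^ ((2 : ℤ) - d) := by
  have one_add_le : 1 + r ≤ 2 * √(1 + r ^ 2) := by
    have : 1 ≤ √(1 + r ^ 2) := Real.one_le_sqrt.2 (by nlinarith)
    have : r ≤ √(1 + r ^ 2) := Real.le_sqrt_of_sq_le (by linarith)
    linarith
  rw [show (2 : ℤ) - d = -((d - 2 : ℕ) : ℤ) by omega, zpow_neg, zpow_natCast, ← inv_pow, ← mul_pow]
  gcongr
  rw [← div_eq_mul_inv, le_div_iff₀ (by positivity), inv_mul_le_iff₀ (by positivity)]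
  linarith

lemma tsum_inv_sqrt_pow_mul_exp_le {d : ℕ} (hd : 4 ≤ d) {r : ℝ} (hr : 0 ≤ r) :
    ∑' j : ℕ, ENNReal.ofReal
        ((√((j : ℝ) + 1))⁻¹ ^ d * Real.exp (-(r ^ 2 / (8 * ((j : ℝ) + 1))))) ≤
      ENNReal.ofReal ((8 * d) ^ d * 2 * 2 ^ (d - 2) * (1 + r) ^ ((2 : ℤ) - d)) := by
  refine ENNReal.tsum_le_of_sum_range_le fun N => ?_
  rw [← ENNReal.ofReal_sum_of_nonneg fun j _ => by positivity]
  refine ENNReal.ofReal_le_ofReal ?_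
  have hM : 0 ≤ r ^ 2 := sq_nonneg r
  have sum_le : ∑ j ∈ Finset.range N, (((j : ℝ) + 1 + r ^ 2) ^ 2)⁻¹ ≤
      2 * (√(1 + r ^ 2))⁻¹ ^ 2 := by
    simp only [add_assoc]
    refine (sum_inv_sq_add_le (by positivity) N).trans ?_
    rw [inv_pow, Real.sq_sqrt (by positivity)]
    calc (1 + (1 + r ^ 2)) / (1 + r ^ 2) * ((1 + r ^ 2)⁻¹ - ((N : ℝ) + (1 + r ^ 2))⁻¹)
        ≤ (1 + (1 + r ^ 2)) / (1 + r ^ 2) * (1 + r ^ 2)⁻¹ := by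
          gcongr
          exact sub_le_self _ (by positivity)
      _ ≤ _ := by
          gcongr
          rw [div_le_iff₀ (by positivity)]
          linarith
  calc _ ≤ ∑ j ∈ Finset.range N,
          (8 * d : ℝ) ^ d * ((√(1 + r ^ 2))⁻¹ ^ (d - 4) * (((j : ℝ) + 1 + r ^ 2) ^ 2)⁻¹) := by
        refine Finset.sum_le_sum fun j _ => ?_
        refine (inv_sqrt_pow_mul_exp_le (by omega) (by positivity) hM).trans ?_
        gcongr
        exact inv_sqrt_pow_le hd (by simp) hM
    _ ≤ (8 * d) ^ d * ((√(1 + r ^ 2))⁻¹ ^ (d - 4) * (2 * (√(1 + r ^ 2))⁻¹ ^ 2)) := by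
        rw [← Finset.mul_sum, ← Finset.mul_sum]
        gcongr
    _ = (8 * d) ^ d * 2 * (√(1 + r ^ 2))⁻¹ ^ (d - 2) := by
        rw [show d - 2 = (d - 4) + 2 by omega, pow_add]; ring
    _ ≤ _ := by
        rw [mul_assoc _ (2 ^ (d - 2))]
        gcongr
        exact inv_sqrt_one_add_sq_pow_le (by omega) hr

variable {ι : Type*} [Fintype ι] [DecidableEq ι]

/- Transience alone would give the convergence of `∑ gaussianMixture j 0`; the additional factor
`j`, which measures the total length of loops, is what costs the fifth dimension. -/
lemma summable_mul_gaussianMixture_zero (hι : 5 ≤ Fintype.card ι) :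
    Summable fun j : ℕ => (j : ℝ) * gaussianMixture j (0 : ι → ℤ) := by
  set K : ℝ := (2 * √(Fintype.card ι)) ^ Fintype.card ι
  have dominating : Summable fun j : ℕ => K * (1 / ((j + 1 : ℕ) : ℝ) ^ (3 / 2 : ℝ)) :=
    ((summable_nat_add_iff 1).2 (Real.summable_one_div_nat_rpow.2 (by norm_num))).mul_left K
  refine dominating.of_nonneg_of_le
    (fun j => mul_nonneg j.cast_nonneg (gaussianMixture_nonneg j 0)) fun j => ?_
  have ht : (0 : ℝ) < j + 1 := by positivity
  have hw : 1 ≤ √((j : ℝ) + 1) := Real.one_le_sqrt.2 (by simp)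
  have rpow_eq : ((j + 1 : ℕ) : ℝ) ^ (3 / 2 : ℝ) = √((j : ℝ) + 1) ^ 3 := by
    rw [Real.sqrt_eq_rpow, ← Real.rpow_natCast, ← Real.rpow_mul ht.le]
    push_cast
    norm_num
  have mixture_le : gaussianMixture j (0 : ι → ℤ) ≤ K * (√((j : ℝ) + 1))⁻¹ ^ 5 := by
    refine (gaussianMixture_le j 0).trans ?_
    gcongr ?_ * ?_
    simpa using pow_le_pow_of_le_one (by positivity) (inv_le_one_of_one_le₀ hw) hι
  calc (j : ℝ) * gaussianMixture j (0 : ι → ℤ)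
      ≤ √((j : ℝ) + 1) ^ 2 * (K * (√((j : ℝ) + 1))⁻¹ ^ 5) := by
        rw [Real.sq_sqrt ht.le]
        gcongr
        · exact gaussianMixture_nonneg j 0
        · linarith
    _ = _ := by rw [rpow_eq]; field_simp

lemma exp_neg_mul_exp_neg_le (a r : ℝ) {t : ℝ} (ht : 0 < t) :
    Real.exp (-a ^ 2 * t) * Real.exp (-(r ^ 2 / (4 * t))) ≤
      Real.exp (-(a * r / 2)) * Real.exp (-(r ^ 2 / (8 * t))) := by
  rw [← Real.exp_add, ← Real.exp_add, Real.exp_le_exp]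
  have slack : a ^ 2 * t + r ^ 2 / (4 * t) - r ^ 2 / (8 * t) - a * r / 2 =
      ((2 * a * t - r) ^ 2 + 4 * a ^ 2 * t ^ 2) / (8 * t) := by
    field_simp
    ring
  have : 0 ≤ ((2 * a * t - r) ^ 2 + 4 * a ^ 2 * t ^ 2) / (8 * t) := by positivity
  linarith

lemma exists_tsum_exp_mul_gaussianMixture_le (hι : 4 ≤ Fintype.card ι) :
    ∃ C > 0, ∀ (a r : ℝ) (x : ι → ℤ), 0 ≤ r → ∑ i, (x i : ℝ) ^ 2 = r ^ 2 →
      ∑' j : ℕ, ENNReal.ofReal (Real.exp (-a ^ 2 * ((j : ℝ) + 1)) * gaussianMixture j x) ≤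
        ENNReal.ofReal
          (C * (1 + r) ^ ((2 : ℤ) - Fintype.card ι) * Real.exp (-(a * r / 2))) := by
  set d := Fintype.card ι
  have : 0 < d := by omega
  refine ⟨(2 * √d) ^ d * ((8 * d) ^ d * 2 * 2 ^ (d - 2)), by positivity, fun a r x hr hx => ?_⟩
  have term_le (j : ℕ) :
      Real.exp (-a ^ 2 * ((j : ℝ) + 1)) * gaussianMixture j x ≤
        (2 * √d) ^ d * Real.exp (-(a * r / 2)) *
          ((√((j : ℝ) + 1))⁻¹ ^ d * Real.exp (-(r ^ 2 / (8 * ((j : ℝ) + 1))))) := by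
    have mixture_le := gaussianMixture_le j x
    rw [hx] at mixture_le
    have exp_le := exp_neg_mul_exp_neg_le a r (t := (j : ℝ) + 1) (by positivity)
    calc _ ≤ Real.exp (-a ^ 2 * ((j : ℝ) + 1)) * ((2 * √d) ^ d *
            ((√((j : ℝ) + 1))⁻¹ ^ d * Real.exp (-(r ^ 2 / (4 * ((j : ℝ) + 1)))))) := by gcongr
      _ = (2 * √d) ^ d * (√((j : ℝ) + 1))⁻¹ ^ d * (Real.exp (-a ^ 2 * ((j : ℝ) + 1)) *
            Real.exp (-(r ^ 2 / (4 * ((j : ℝ) + 1))))) := by ring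
      _ ≤ (2 * √d) ^ d * (√((j : ℝ) + 1))⁻¹ ^ d * (Real.exp (-(a * r / 2)) *
            Real.exp (-(r ^ 2 / (8 * ((j : ℝ) + 1))))) := by gcongr
      _ = _ := by ring
  refine (ENNReal.tsum_le_tsum fun j => ENNReal.ofReal_le_ofReal (term_le j)).trans ?_
  simp only [ENNReal.ofReal_mul (show 0 ≤ (2 * √d) ^ d * Real.exp (-(a * r / 2)) by positivity)]
  rw [ENNReal.tsum_mul_left]
  refine (mul_le_mul_right (tsum_inv_sqrt_pow_mul_exp_le (by omega) hr) _).trans_eq ?_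
  rw [← ENNReal.ofReal_mul (by positivity)]
  congr 1
  ring

end GreenFunction

section Paths

variable {α : Type*} {r : α → α → Prop} {A B : Set α} {u x y z : α} {l L L' R R' : List α}

/-- `l` lists the successive vertices of a finite `r`-path in `A` from `y` to `z`; for `z = y` these
are the loops at `y`. -/
structure IsPath (r : α → α → Prop) (A : Set α) (y z : α) (l : List α) : Prop where
  isChain : l.IsChain r
  head? : l.head? = some y
  getLast? : l.getLast? = some z
  mem : ∀ v ∈ l, v ∈ A

/-- `l` is an `r`-path in `A` from `y` stopped at its first visit to `x`. -/
structure IsHittingPath (r : α → α → Prop) (A : Set α) (y x : α) (l : List α) : Prop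
    extends IsPath r A y x l where
  notMem_dropLast : x ∉ l.dropLast

lemma isPath_singleton (hy : y ∈ A) : IsPath r A y y [y] :=
  ⟨by simp, rfl, rfl, by simpa using hy⟩

namespace IsPath

lemma ne_nil (h : IsPath r A y z l) : l ≠ [] := by
  rintro rfl
  simpa using h.head?

lemma exists_length_eq (h : IsPath r A y z l) : ∃ m, l.length = m + 1 :=
  Nat.exists_eq_add_one.2 (List.length_pos_iff.2 h.ne_nil)

lemma start_mem (h : IsPath r A y z l) : y ∈ A :=
  h.mem y (List.mem_of_mem_head? h.head?)

lemma mono (hAB : A ⊆ B) (h : IsPath r A y z l) : IsPath r B y z l :=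
  ⟨h.isChain, h.head?, h.getLast?, fun v hv => hAB (h.mem v hv)⟩

lemma diff_singleton (h : IsPath r A y z l) (hx : x ∉ l) : IsPath r (A \ {x}) y z l :=
  ⟨h.isChain, h.head?, h.getLast?, fun v hv => ⟨h.mem v hv, ne_of_mem_of_not_mem hv hx⟩⟩

lemma notMem_of_diff (h : IsPath r (A \ {x}) y z l) : x ∉ l := fun hx => (h.mem x hx).2 rfl

lemma append (hL : IsPath r A y u L) (huz : r u z) (hR : IsPath r A z x R) :
    IsPath r A y x (L ++ R) where
  isChain := hL.isChain.append hR.isChain <| by simpa [hL.getLast?, hR.head?] using huz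
  head? := by simp [hL.head?]
  getLast? := by simp [hR.getLast?]
  mem v hv := (List.mem_append.1 hv).elim (hL.mem v) (hR.mem v)

lemma exists_of_append (h : IsPath r A y x (L ++ [u] ++ R)) (hR : R ≠ []) :
    ∃ z, IsPath r A y u (L ++ [u]) ∧ r u z ∧ IsPath r A z x R := by
  obtain ⟨z, t, rfl⟩ := List.exists_cons_of_ne_nil hR
  obtain ⟨chain_left, chain_right, link⟩ := List.isChain_append.1 h.isChain
  refine ⟨z, ⟨chain_left, ?_, by simp, fun v hv => h.mem v (List.mem_append_left _ hv)⟩,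
    link u (by simp) z rfl,
    ⟨chain_right, rfl, ?_, fun v hv => h.mem v (List.mem_append_right _ hv)⟩⟩
  · rw [← h.head?]
    cases L <;> rfl
  · rw [← h.getLast?, List.getLast?_append_of_ne_nil _ hR]

end IsPath

lemma IsHittingPath.eq_singleton (h : IsHittingPath r A x x l) : l = [x] := by
  obtain ⟨t, rfl⟩ := List.head?_eq_some_iff.1 h.head?
  cases t with
  | nil => rfl
  | cons v t => exact absurd h.notMem_dropLast (by simp)

lemma IsPath.append_isHittingPath (hL : IsPath r (A \ {x}) y y L) (hyz : r y z)
    (hR : IsHittingPath r (A \ {y}) z x R) : IsHittingPath r A y x (L ++ R) where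
  toIsPath := (hL.mono Set.sdiff_subset).append hyz (hR.toIsPath.mono Set.sdiff_subset)
  notMem_dropLast := by
    rw [List.dropLast_append_of_ne_nil hR.ne_nil, List.mem_append, not_or]
    exact ⟨hL.notMem_of_diff, hR.notMem_dropLast⟩

lemma exists_eq_append_cons_notMem (h : y ∈ l) : ∃ s t, l = s ++ y :: t ∧ y ∉ t := by
  obtain ⟨t, s, hl, ht⟩ := List.eq_append_cons_of_mem (List.mem_reverse.2 h)
  exact ⟨s.reverse, t.reverse, by simpa using congrArg List.reverse hl, by simpa using ht⟩

lemma IsHittingPath.exists_append (h : IsHittingPath r A y x l) (hyx : y ≠ x) :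
    ∃ L z R, L ++ R = l ∧ IsPath r (A \ {x}) y y L ∧ r y z ∧ IsHittingPath r (A \ {y}) z x R := by
  obtain ⟨s, t, rfl, hyt⟩ := exists_eq_append_cons_notMem (List.mem_of_mem_head? h.head?)
  have ht : t ≠ [] := by
    rintro rfl
    exact hyx (by simpa using h.getLast?)
  rw [List.append_cons] at h
  obtain ⟨z, hL, hyz, hR⟩ := h.exists_of_append ht
  have hx := h.notMem_dropLast
  rw [List.dropLast_append_of_ne_nil ht, List.mem_append, not_or] at hx
  exact ⟨s ++ [y], z, t, by simp, hL.diff_singleton hx.1, hyz, hR.diff_singleton hyt, hx.2⟩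

lemma append_inj_of_getLast? (hL : L.getLast? = some y) (hL' : L'.getLast? = some y)
    (hR : y ∉ R) (hR' : y ∉ R') (h : L ++ R = L' ++ R') : L = L' ∧ R = R' := by
  have eq_nil {K K' S : List α} (hK' : K'.getLast? = some y) (a : List α) (hKa : K' = K ++ a)
      (hS : a ⊆ S) (hyS : y ∉ S) : a = [] := by
    by_contra ha
    rw [hKa, List.getLast?_append_of_ne_nil _ ha] at hK'
    exact hyS (hS (List.mem_of_mem_getLast? hK'))
  rcases List.append_eq_append_iff.1 h with ⟨a, rfl, rfl⟩ | ⟨a, rfl, rfl⟩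
  · obtain rfl := eq_nil hL' a rfl (List.subset_append_left _ _) hR
    simp
  · obtain rfl := eq_nil hL a rfl (List.subset_append_left _ _) hR'
    simp

end Paths

section GeneratingFunction

variable {α : Type*} {r : α → α → Prop} {A : Set α} {x y z : α}

/-- The generating function `∑ p ^ |l|` of the lists satisfying `P`. When the lists are paths, it
weights vertices rather than steps, which makes it multiplicative under concatenation. -/
noncomputable def genFun (p : ℝ≥0∞) (P : List α → Prop) : ℝ≥0∞ := ∑' l : {l // P l}, p ^ l.1.length

lemma genFun_mono (p : ℝ≥0∞) {P Q : List α → Prop} (h : ∀ l, P l → Q l) :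
    genFun p P ≤ genFun p Q :=
  ENNReal.tsum_comp_le_tsum_of_injective (Subtype.impEmbedding P Q h).injective
    fun l : {l // Q l} => p ^ l.1.length

lemma le_genFun (p : ℝ≥0∞) {P : List α → Prop} {l : List α} (h : P l) :
    p ^ l.length ≤ genFun p P :=
  ENNReal.le_tsum (f := fun l : {l // P l} => p ^ l.1.length) ⟨l, h⟩

lemma genFun_eq_zero (p : ℝ≥0∞) {P : List α → Prop} (h : ∀ l, ¬ P l) : genFun p P = 0 := by
  have : IsEmpty {l // P l} := ⟨fun l => h l.1 l.2⟩
  exact tsum_empty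

lemma genFun_eq_singleton (p : ℝ≥0∞) (v : α) : genFun p (fun l => l = [v]) = p := by
  exact (tsum_singleton [v] fun l => p ^ l.length).trans (pow_one p)

lemma tsum_mul_pow_length_eq (w : ℕ → ℝ≥0∞) (p : ℝ≥0∞) (P : List α → Prop) :
    ∑' l : {l // P l}, w l.1.length * p ^ l.1.length =
      ∑' n, w n * genFun p fun l => P l ∧ l.length = n := by
  rw [← (Equiv.sigmaFiberEquiv fun l : {l // P l} => l.1.length).tsum_eq, ENNReal.tsum_sigma']
  congr 1
  ext n
  rw [genFun, ← ENNReal.tsum_mul_left,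
    ← (Equiv.subtypeSubtypeEquivSubtypeInter P fun l => l.length = n).tsum_eq]
  congr 1
  ext l
  obtain ⟨l, rfl⟩ := l
  rfl

lemma genFun_isHittingPath_eq (hyx : y ≠ x) (p : ℝ≥0∞) {S T : List α → Prop}
    (hST : ∀ L R, IsPath r (A \ {x}) y y L → y ∉ R → (S (L ++ R) ↔ T R)) :
    genFun p (fun l => IsHittingPath r A y x l ∧ S l) =
      genFun p (IsPath r (A \ {x}) y y) *
        ∑' z : {z // r y z}, genFun p fun R => IsHittingPath r (A \ {y}) z x R ∧ T R := by
  let concat (t : {L // IsPath r (A \ {x}) y y L} ×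
      Σ z : {z // r y z}, {R // IsHittingPath r (A \ {y}) z x R ∧ T R}) :
      {l // IsHittingPath r A y x l ∧ S l} :=
    ⟨t.1.1 ++ t.2.2.1, t.1.2.append_isHittingPath t.2.1.2 t.2.2.2.1,
      (hST _ _ t.1.2 t.2.2.2.1.notMem_of_diff).2 t.2.2.2.2⟩
  have injective : concat.Injective := by
    rintro ⟨⟨L, hL⟩, ⟨z, hz⟩, ⟨R, hR, hTR⟩⟩ ⟨⟨L', hL'⟩, ⟨z', hz'⟩, ⟨R', hR', hTR'⟩⟩ h
    obtain ⟨rfl, rfl⟩ := append_inj_of_getLast? hL.getLast? hL'.getLast? hR.notMem_of_diff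
      hR'.notMem_of_diff (congrArg Subtype.val h)
    obtain rfl : z = z' := Option.some_injective _ (hR.head?.symm.trans hR'.head?)
    rfl
  have surjective : concat.Surjective := by
    rintro ⟨l, hl, hS⟩
    obtain ⟨L, z, R, rfl, hL, hz, hR⟩ := hl.exists_append hyx
    exact ⟨⟨⟨L, hL⟩, ⟨z, hz⟩, ⟨R, hR, (hST L R hL hR.notMem_of_diff).1 hS⟩⟩, rfl⟩
  calc genFun p (fun l => IsHittingPath r A y x l ∧ S l)
      = ∑' t, p ^ (concat t).1.length :=
        ((Equiv.ofBijective concat ⟨injective, surjective⟩).tsum_eq fun l => p ^ l.1.length).symm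
    _ = ∑' L, ∑' t, p ^ (concat (L, t)).1.length := ENNReal.tsum_prod'
    _ = _ := by
      simp only [concat, List.length_append, pow_add, ENNReal.tsum_mul_left,
        ENNReal.tsum_mul_right, ENNReal.tsum_sigma', genFun]

end GeneratingFunction

section PathCounting

variable {α : Type*} {r : α → α → Prop} {A : Set α} {y z : α}

lemma genFun_isPath_length_succ_le (p : ℝ≥0∞) (j : ℕ) :
    genFun p (fun l => IsPath r Set.univ y z l ∧ l.length = j + 2) ≤
      p * ∑' w : {w // r y w}, genFun p fun l => IsPath r Set.univ w z l ∧ l.length = j + 1 := by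
  let cons (t : Σ w : {w // r y w}, {l // IsPath r Set.univ w z l ∧ l.length = j + 1}) :
      {l // IsPath r Set.univ y z l ∧ l.length = j + 2} :=
    ⟨y :: t.2.1, (isPath_singleton (Set.mem_univ y)).append t.1.2 t.2.2.1,
      congrArg Nat.succ t.2.2.2⟩
  have surjective : cons.Surjective := by
    rintro ⟨l, hl, hlen⟩
    obtain ⟨t, rfl⟩ := List.head?_eq_some_iff.1 hl.head?
    have ht : t ≠ [] := by
      rintro rfl
      simp at hlen
    obtain ⟨w, -, hyw, hw⟩ := IsPath.exists_of_append (L := []) hl ht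
    exact ⟨⟨⟨w, hyw⟩, ⟨t, hw, Nat.succ_injective hlen⟩⟩, rfl⟩
  calc _ ≤ ∑' t, p ^ (cons t).1.length :=
        ENNReal.tsum_le_tsum_comp_of_surjective surjective fun l => p ^ l.1.length
    _ = _ := by
        simp only [cons, List.length_cons, pow_succ', ENNReal.tsum_mul_left, ENNReal.tsum_sigma',
          genFun]

lemma genFun_isPath_length_le {p : ℝ≥0∞} {H : ℕ → α → ℝ≥0∞} (h_zero : 1 ≤ H 0 z)
    (h_succ : ∀ j y, p * ∑' w : {w // r y w}, H j w ≤ H (j + 1) y) (j : ℕ) (y : α) :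
    genFun p (fun l => IsPath r A y z l ∧ l.length = j + 1) ≤ p * H j y := by
  calc genFun p (fun l => IsPath r A y z l ∧ l.length = j + 1)
      ≤ genFun p fun l => IsPath r Set.univ y z l ∧ l.length = j + 1 :=
        genFun_mono p fun l h => ⟨h.1.mono (Set.subset_univ A), h.2⟩
    _ ≤ p * H j y := ?_
  induction j generalizing y with
  | zero =>
    rcases eq_or_ne y z with rfl | hyz
    · calc _ ≤ genFun p fun l => l = [y] := genFun_mono p fun l ⟨hl, hlen⟩ => by
            obtain ⟨v, rfl⟩ := List.length_eq_one_iff.1 hlen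
            simpa using hl.head?
        _ = p * 1 := by rw [genFun_eq_singleton, mul_one]
        _ ≤ _ := by gcongr
    · rw [genFun_eq_zero p]
      · exact zero_le
      · rintro l ⟨hl, hlen⟩
        obtain ⟨v, rfl⟩ := List.length_eq_one_iff.1 hlen
        exact hyz (Option.some_injective _ (hl.head?.symm.trans hl.getLast?))
  | succ j ih =>
    refine (genFun_isPath_length_succ_le p j).trans ?_
    gcongr
    refine le_trans ?_ (h_succ j y)
    rw [← ENNReal.tsum_mul_left]
    exact ENNReal.tsum_le_tsum fun w => ih w

end PathCounting

section LoopTilting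

variable {α : Type*} {r : α → α → Prop} {B : Set α} {y : α}

lemma one_le_ofReal_exp_neg_pow_add {t : ℝ} (ht : 0 ≤ t) (m : ℕ) :
    1 ≤ ENNReal.ofReal (Real.exp (-t)) ^ m + ENNReal.ofReal t * m := by
  rw [← ENNReal.ofReal_pow (Real.exp_pos _).le, ← Real.exp_nat_mul, ← ENNReal.ofReal_natCast,
    ← ENNReal.ofReal_mul ht, ← ENNReal.ofReal_add (Real.exp_pos _).le (by positivity),
    ← ENNReal.ofReal_one]
  refine ENNReal.ofReal_le_ofReal ?_
  linarith [Real.add_one_le_exp ((m : ℝ) * -t)]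

lemma ofReal_exp_mul_ofReal_exp_neg (t : ℝ) :
    ENNReal.ofReal (Real.exp t) * ENNReal.ofReal (Real.exp (-t)) = 1 := by
  rw [← ENNReal.ofReal_mul (Real.exp_pos _).le, ← Real.exp_add, add_neg_cancel, Real.exp_zero,
    ENNReal.ofReal_one]

lemma genFun_le_tilted_add {t : ℝ} (ht : 0 ≤ t) (q : ℝ≥0∞) {P : List α → Prop}
    (hP : ∀ l, P l → l ≠ []) :
    genFun q P ≤
      ENNReal.ofReal (Real.exp t) * genFun (ENNReal.ofReal (Real.exp (-t)) * q) P +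
        ENNReal.ofReal t * ∑' l : {l // P l}, ((l.1.length - 1 : ℕ) : ℝ≥0∞) * q ^ l.1.length := by
  rw [genFun, genFun, ← ENNReal.tsum_mul_left, ← ENNReal.tsum_mul_left, ← ENNReal.tsum_add]
  refine ENNReal.tsum_le_tsum fun ⟨l, hl⟩ => ?_
  obtain ⟨m, hm⟩ := Nat.exists_eq_add_one.2 (List.length_pos_iff.2 (hP l hl))
  set s := ENNReal.ofReal (Real.exp (-t))
  simp only [hm, Nat.add_sub_cancel]
  calc q ^ (m + 1) ≤ q ^ (m + 1) * (s ^ m + ENNReal.ofReal t * m) :=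
        le_mul_of_one_le_right' (one_le_ofReal_exp_neg_pow_add ht m)
    _ = ENNReal.ofReal (Real.exp t) * s * (q ^ (m + 1) * s ^ m) +
          ENNReal.ofReal t * (m * q ^ (m + 1)) := by
        rw [ofReal_exp_mul_ofReal_exp_neg]; ring
    _ = _ := by ring

lemma genFun_loop_le_mul_tilted {κ t : ℝ} (hκ : 0 ≤ κ) (ht : 0 ≤ t) {q : ℝ≥0∞}
    (moment : ∑' l : {l // IsPath r B y y l}, ((l.1.length - 1 : ℕ) : ℝ≥0∞) * q ^ l.1.length ≤
      q * ENNReal.ofReal κ) :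
    genFun q (IsPath r B y y) ≤ ENNReal.ofReal (Real.exp ((1 + κ) * t)) *
      genFun (ENNReal.ofReal (Real.exp (-t)) * q) (IsPath r B y y) := by
  by_cases hy : y ∈ B
  swap
  · rw [genFun_eq_zero q fun l hl => hy hl.start_mem]
    exact zero_le
  set E := ENNReal.ofReal (Real.exp t)
  set G := genFun (ENNReal.ofReal (Real.exp (-t)) * q) (IsPath r B y y)
  have trivial_loop : q ≤ E * G := by
    calc q = E * (ENNReal.ofReal (Real.exp (-t)) * q) := by
          rw [← mul_assoc, ofReal_exp_mul_ofReal_exp_neg, one_mul]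
      _ ≤ E * G := by
          gcongr
          simpa using le_genFun (ENNReal.ofReal (Real.exp (-t)) * q) (isPath_singleton (r := r) hy)
  have factor_le : (1 + ENNReal.ofReal t * ENNReal.ofReal κ) * E ≤
      ENNReal.ofReal (Real.exp ((1 + κ) * t)) := by
    rw [← ENNReal.ofReal_mul ht, ← ENNReal.ofReal_one,
      ← ENNReal.ofReal_add one_pos.le (by positivity), ← ENNReal.ofReal_mul (by positivity),
      show (1 + κ) * t = t * κ + t by ring, Real.exp_add]
    gcongr
    linarith [Real.add_one_le_exp (t * κ)]
  calc genFun q (IsPath r B y y)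
      ≤ E * G + ENNReal.ofReal t * (q * ENNReal.ofReal κ) := by
        refine (genFun_le_tilted_add ht q fun l hl => hl.ne_nil).trans ?_
        gcongr
    _ ≤ E * G + ENNReal.ofReal t * (E * G * ENNReal.ofReal κ) := by gcongr
    _ = (1 + ENNReal.ofReal t * ENNReal.ofReal κ) * E * G := by ring
    _ ≤ _ := by gcongr

end LoopTilting

section LoopErasure

lemma leAux_append (acc l₁ l₂ : List (V d)) :
    leAux acc (l₁ ++ l₂) = leAux (leAux acc l₁) l₂ := by
  induction l₁ generalizing acc with
  | nil => rfl
  | cons v t ih =>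
    simp only [List.cons_append, leAux]
    split_ifs <;> exact ih _

lemma exists_leAux_cons_eq (y : V d) (acc l : List (V d)) : ∃ t, leAux (y :: acc) l = y :: t := by
  induction l generalizing acc with
  | nil => exact ⟨acc, rfl⟩
  | cons v t ih =>
    simp only [leAux]
    split_ifs
    · rcases eq_or_ne y v with rfl | hyv
      · simpa using ih []
      · simpa [hyv] using ih _
    · exact ih _

lemma leAux_cons_of_notMem {y : V d} {l : List (V d)} (hy : y ∉ l) (acc : List (V d)) :
    leAux (y :: acc) l = y :: leAux acc l := by
  induction l generalizing acc with
  | nil => rfl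
  | cons v t ih =>
    obtain ⟨hyv, hyt⟩ : y ≠ v ∧ y ∉ t := by simpa using hy
    simp only [leAux, List.mem_cons, Ne.symm hyv, false_or]
    split_ifs
    · simpa [hyv] using ih hyt _
    · exact ih hyt _

lemma loopErase_ne_nil {l : List (V d)} (h : l ≠ []) : loopErase l ≠ [] := by
  obtain ⟨v, t, rfl⟩ := List.exists_cons_of_ne_nil h
  obtain ⟨s, hs⟩ := exists_leAux_cons_eq v [] t
  simp [loopErase, leAux, hs]

variable {r : V d → V d → Prop} {A B : Set (V d)} {x y z : V d} {L R : List (V d)}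

lemma IsPath.loopErase_loop (h : IsPath r A y y L) : loopErase L = [y] := by
  obtain ⟨t, rfl⟩ := List.head?_eq_some_iff.1 h.head?
  rcases List.eq_nil_or_concat' t with rfl | ⟨s, v, rfl⟩
  · simp [loopErase, leAux]
  · obtain rfl : v = y := by
      have last := h.getLast?
      rw [← List.cons_append, List.getLast?_concat] at last
      exact Option.some_injective _ last
    obtain ⟨u, hu⟩ := exists_leAux_cons_eq v [] s
    rw [loopErase, ← List.cons_append, leAux_append]
    simp [leAux, hu]

lemma IsPath.loopErase_loop_append (h : IsPath r A y y L) (hR : y ∉ R) :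
    loopErase (L ++ R) = y :: loopErase R := by
  have hL : leAux [] L = [y] := h.loopErase_loop
  rw [loopErase, leAux_append, hL, leAux_cons_of_notMem hR, loopErase]

lemma genFun_loopErase_length_le {q p Λ : ℝ≥0∞} (hΛ : 1 ≤ Λ) (hq : q ≤ Λ * p)
    (hloop : ∀ B y, genFun q (IsPath r B y y) ≤ Λ * genFun p (IsPath r B y y))
    (A : Set (V d)) (x y : V d) (M : ℕ) :
    genFun q (fun l => IsHittingPath r A y x l ∧ (loopErase l).length ≤ M) ≤
      Λ ^ M * genFun p (IsHittingPath r A y x) := by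
  induction M generalizing A y with
  | zero =>
    rw [genFun_eq_zero q fun l h =>
      loopErase_ne_nil h.1.ne_nil (List.length_eq_zero_iff.1 (Nat.le_zero.1 h.2))]
    exact zero_le
  | succ M ih =>
    rcases eq_or_ne y x with rfl | hyx
    · refine (genFun_mono q fun l => And.left).trans ?_
      rw [genFun, genFun, ← ENNReal.tsum_mul_left]
      refine ENNReal.tsum_le_tsum fun l => ?_
      rw [l.2.eq_singleton, List.length_singleton, pow_one, pow_one]
      exact hq.trans (by gcongr; exact le_self_pow hΛ M.succ_ne_zero)
    · have erase_step (L R : List (V d)) (hL : IsPath r (A \ {x}) y y L) (hR : y ∉ R) :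
          (loopErase (L ++ R)).length ≤ M + 1 ↔ (loopErase R).length ≤ M := by
        simp [hL.loopErase_loop_append hR]
      have factorization := genFun_isHittingPath_eq (r := r) (A := A) hyx p
        (S := fun _ => True) (T := fun _ => True) fun _ _ _ _ => Iff.rfl
      simp only [and_true] at factorization
      rw [genFun_isHittingPath_eq hyx q erase_step]
      calc _ ≤ (Λ * genFun p (IsPath r (A \ {x}) y y)) *
              ∑' z : {z // r y z}, Λ ^ M * genFun p (IsHittingPath r (A \ {y}) z x) :=
            mul_le_mul' (hloop _ _) (ENNReal.tsum_le_tsum fun z => ih _ z)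
        _ = Λ ^ (M + 1) * (genFun p (IsPath r (A \ {x}) y y) *
              ∑' z : {z // r y z}, genFun p (IsHittingPath r (A \ {y}) z x)) := by
            rw [ENNReal.tsum_mul_left]; ring
        _ = _ := by rw [← factorization]

end LoopErasure

section Lattice

lemma exists_eq_one_of_sum_eq_one {ι : Type*} [Fintype ι] {f : ι → ℕ} (h : ∑ i, f i = 1) :
    ∃ i, f i = 1 ∧ ∀ k ≠ i, f k = 0 := by
  obtain ⟨i, -, hi⟩ := Finset.exists_ne_zero_of_sum_ne_zero (h.trans_ne one_ne_zero)
  rw [← Finset.add_sum_erase _ _ (Finset.mem_univ i)] at h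
  have others : ∑ k ∈ Finset.univ.erase i, f k = 0 := by omega
  exact ⟨i, by omega, fun k hk =>
    Finset.sum_eq_zero_iff.1 others k (Finset.mem_erase.2 ⟨hk, Finset.mem_univ k⟩)⟩

lemma adj_iff {v w : V d} : adj v w ↔ ∃ i, w = v + Pi.single i 1 ∨ w = v - Pi.single i 1 := by
  constructor
  · intro h
    obtain ⟨i, hi, hk⟩ := exists_eq_one_of_sum_eq_one (f := fun i => (v i - w i).natAbs) <| by
      zify
      exact h
    have eq_off (k : Fin d) (hki : k ≠ i) : w k = v k := by
      have := hk k hki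
      omega
    refine ⟨i, (Int.natAbs_eq_iff.1 hi).symm.imp (fun hi => ?_) fun hi => ?_⟩ <;>
    · ext k
      rcases eq_or_ne k i with rfl | hki
      · simp
        omega
      · simp [hki, eq_off]
  · rintro ⟨i, rfl | rfl⟩ <;> simp [adj, Pi.single_apply, apply_ite abs]

lemma tsum_adj_eq (v : V d) (f : V d → ℝ≥0∞) :
    ∑' w : {w // adj v w}, f w = ∑ i, (f (v + Pi.single i 1) + f (v - Pi.single i 1)) := by
  let neighbor : Fin d ⊕ Fin d → {w // adj v w} :=
    Sum.elim (fun i => ⟨v + Pi.single i 1, adj_iff.2 ⟨i, .inl rfl⟩⟩)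
      fun i => ⟨v - Pi.single i 1, adj_iff.2 ⟨i, .inr rfl⟩⟩
  have bijective : neighbor.Bijective := by
    constructor
    · rintro (i | i) (k | k) h <;>
      · have hi := congrFun (congrArg Subtype.val h) i
        simp only [neighbor, Sum.elim_inl, Sum.elim_inr, Pi.add_apply, Pi.sub_apply,
          Pi.single_apply] at hi
        grind
    · rintro ⟨w, hw⟩
      obtain ⟨i, rfl | rfl⟩ := adj_iff.1 hw
      exacts [⟨.inl i, rfl⟩, ⟨.inr i, rfl⟩]
  rw [← (Equiv.ofBijective neighbor bijective).tsum_eq, tsum_fintype, Fintype.sum_sum_type,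
    ← Finset.sum_add_distrib]
  rfl

/-- The transition probability of simple random walk along each edge of `ℤ^d`. -/
noncomputable def stepProb (d : ℕ) : ℝ≥0∞ := (2 * (d : ℝ≥0∞))⁻¹

lemma stepProb_eq_ofReal (hd : 0 < d) : stepProb d = ENNReal.ofReal (2 * (d : ℝ))⁻¹ := by
  rw [ENNReal.ofReal_inv_of_pos (by positivity), ENNReal.ofReal_mul zero_le_two]
  simp [stepProb]

lemma stepProb_ne_zero : stepProb d ≠ 0 := by
  simp [stepProb, ENNReal.mul_eq_top]

lemma stepProb_ne_top (hd : 0 < d) : stepProb d ≠ ∞ := by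
  rw [stepProb_eq_ofReal hd]
  exact ENNReal.ofReal_ne_top

lemma tsum_adj_stepProb (hd : 0 < d) (v : V d) : ∑' _ : {w // adj v w}, stepProb d = 1 := by
  rw [tsum_adj_eq v fun _ => stepProb d]
  simp only [← two_mul, Finset.sum_const, Finset.card_univ, Fintype.card_fin, nsmul_eq_mul]
  rw [mul_left_comm, ← mul_assoc]
  exact ENNReal.mul_inv_cancel (by simp [hd.ne']) (by finiteness)

lemma stepProb_mul_tsum_gaussianMixture_le (hd : 0 < d) (j : ℕ) (y z : V d) :
    stepProb d * ∑' w : {w // adj y w}, ENNReal.ofReal (gaussianMixture j (z - w.1)) ≤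
      ENNReal.ofReal (gaussianMixture (j + 1) (z - y)) := by
  have average_le := gaussianMixture_average_le j (z - y)
  rw [Fintype.card_fin] at average_le
  rw [tsum_adj_eq y fun w => ENNReal.ofReal (gaussianMixture j (z - w)), stepProb_eq_ofReal hd]
  simp only [← ENNReal.ofReal_add (gaussianMixture_nonneg _ _) (gaussianMixture_nonneg _ _)]
  rw [← ENNReal.ofReal_sum_of_nonneg fun i _ =>
    add_nonneg (gaussianMixture_nonneg _ _) (gaussianMixture_nonneg _ _),
    ← ENNReal.ofReal_mul (by positivity)]
  simpa only [← sub_sub, sub_sub_eq_add_sub, sub_add_eq_add_sub] using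
    ENNReal.ofReal_le_ofReal average_le

lemma genFun_isPath_length_le_gaussianMixture (hd : 0 < d) (j : ℕ) (A : Set (V d)) (y z : V d) :
    genFun (stepProb d) (fun l => IsPath adj A y z l ∧ l.length = j + 1) ≤
      stepProb d * ENNReal.ofReal (gaussianMixture j (z - y)) :=
  genFun_isPath_length_le (H := fun j y => ENNReal.ofReal (gaussianMixture j (z - y)))
    (by simp [gaussianMixture_zero_zero])
    (fun j y => stepProb_mul_tsum_gaussianMixture_le hd j y z) j y

lemma tsum_mul_stepProb_pow_isPath_le (hd : 0 < d) (w : ℕ → ℝ≥0∞) (A : Set (V d)) (y z : V d) :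
    ∑' l : {l // IsPath adj A y z l}, w l.1.length * stepProb d ^ l.1.length ≤
      stepProb d * ∑' j, w (j + 1) * ENNReal.ofReal (gaussianMixture j (z - y)) := by
  rw [tsum_mul_pow_length_eq, tsum_eq_zero_add' ENNReal.summable,
    genFun_eq_zero _ fun l h => h.1.ne_nil (List.length_eq_zero_iff.1 h.2), mul_zero, zero_add,
    ← ENNReal.tsum_mul_left]
  refine ENNReal.tsum_le_tsum fun j => ?_
  rw [mul_left_comm]
  gcongr
  exact genFun_isPath_length_le_gaussianMixture hd j A y z

/-- The constant `∑ j * gaussianMixture j 0`, which bounds the expected total length of the returns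
of simple random walk to its starting point. -/
noncomputable def returnMoment (d : ℕ) : ℝ := ∑' j : ℕ, j * gaussianMixture j (0 : V d)

lemma returnMoment_nonneg : 0 ≤ returnMoment d :=
  tsum_nonneg fun j => mul_nonneg j.cast_nonneg (gaussianMixture_nonneg j 0)

lemma tsum_loop_le_returnMoment (hd : 5 ≤ d) (B : Set (V d)) (y : V d) :
    ∑' l : {l // IsPath adj B y y l}, ((l.1.length - 1 : ℕ) : ℝ≥0∞) * stepProb d ^ l.1.length ≤
      stepProb d * ENNReal.ofReal (returnMoment d) := by
  refine (tsum_mul_stepProb_pow_isPath_le (by omega) (fun n => ((n - 1 : ℕ) : ℝ≥0∞))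
    B y y).trans_eq ?_
  rw [returnMoment, ENNReal.ofReal_tsum_of_nonneg
    (fun j => mul_nonneg j.cast_nonneg (gaussianMixture_nonneg j 0))
    (summable_mul_gaussianMixture_zero (by simpa using hd))]
  simp only [ENNReal.ofReal_mul (Nat.cast_nonneg _), ENNReal.ofReal_natCast, sub_self,
    Nat.add_sub_cancel]

lemma genFun_isPath_exp_le (hd : 0 < d) (t : ℝ) (A : Set (V d)) (y z : V d) :
    genFun (ENNReal.ofReal (Real.exp (-t)) * stepProb d) (IsPath adj A y z) ≤
      stepProb d *
        ∑' j : ℕ, ENNReal.ofReal (Real.exp (-t * ((j : ℝ) + 1)) * gaussianMixture j (z - y)) := by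
  have exp_pow (j : ℕ) :
      ENNReal.ofReal (Real.exp (-t)) ^ (j + 1) =
        ENNReal.ofReal (Real.exp (-t * ((j : ℝ) + 1))) := by
    rw [← ENNReal.ofReal_pow (Real.exp_pos _).le, ← Real.exp_nat_mul, mul_comm]
    push_cast
    rfl
  simp only [genFun, mul_pow]
  refine (tsum_mul_stepProb_pow_isPath_le hd (ENNReal.ofReal (Real.exp (-t)) ^ ·) A y z).trans_eq ?_
  simp only [exp_pow, ENNReal.ofReal_mul (Real.exp_pos _).le]

end Lattice

section WalkLaw

/-- The set of trajectories whose initial segment is `l`. -/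
def pathCylinder (l : List (V d)) : Set (ℕ → V d) := {ω | (List.range l.length).map ω = l}

lemma mem_pathCylinder_iff {l : List (V d)} {ω : ℕ → V d} :
    ω ∈ pathCylinder l ↔ ∀ i (h : i < l.length), ω i = l[i] := by
  simp [pathCylinder, List.ext_getElem_iff]

lemma measurableSet_pathCylinder (l : List (V d)) : MeasurableSet (pathCylinder l) := by
  have : pathCylinder l = ⋂ i : Fin l.length, (fun ω => ω i) ⁻¹' {l[i]} := by
    ext ω
    simp [mem_pathCylinder_iff, Fin.forall_iff]
  rw [this]
  exact .iInter fun i => measurable_pi_apply (i : ℕ) (measurableSet_singleton _)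

lemma mem_pathCylinder_concat {l : List (V d)} {w : V d} {ω : ℕ → V d} :
    ω ∈ pathCylinder (l ++ [w]) ↔ ω ∈ pathCylinder l ∧ ω l.length = w := by
  simp [pathCylinder, List.range_succ]

lemma mem_pathCylinder_map_range (ω : ℕ → V d) (n : ℕ) :
    ω ∈ pathCylinder ((List.range n).map ω) := by
  simp [pathCylinder]

lemma isPath_map_range {ω : ℕ → V d} {n : ℕ} (h : ∀ i < n, adj (ω i) (ω (i + 1))) :
    IsPath adj Set.univ (ω 0) (ω n) ((List.range (n + 1)).map ω) where
  isChain := List.isChain_iff_getElem.2 fun i hi => by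
    simp only [List.length_map, List.length_range] at hi
    simpa using h i (by omega)
  head? := by simp [List.range_succ_eq_map]
  getLast? := by simp [List.range_succ]
  mem v _ := Set.mem_univ v

namespace IsSRWLaw

variable {μ : Measure (ℕ → V d)} {x y z : V d} {A : Set (V d)} {l : List (V d)}

lemma measure_pathCylinder (hμ : IsSRWLaw μ y) (hl : IsPath adj A y z l) {m : ℕ}
    (hm : l.length = m + 1) : μ (pathCylinder l) = stepProb d ^ m := by
  have getD_eq (i : ℕ) (hi : i < l.length) : l.getD i y = l[i] := by simp [hi]
  have start : l.getD 0 y = y := by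
    simp [List.getD_eq_getElem?_getD, ← List.head?_eq_getElem?, hl.head?]
  have cylinder := hμ.2 m (l.getD · y) start fun i hi => by
    rw [getD_eq i (by omega), getD_eq (i + 1) (by omega)]
    exact List.isChain_iff_getElem.1 hl.isChain i (by omega)
  rw [stepProb, ← cylinder]
  congr 1
  ext ω
  rw [mem_pathCylinder_iff]
  refine forall_congr' fun i => ⟨fun h hi => ?_, fun h hi => ?_⟩
  · rw [getD_eq i (by omega), h]
  · rw [h (by omega), getD_eq i hi]

lemma ae_adj_of_mem_pathCylinder (hd : 0 < d) (hμ : IsSRWLaw μ y)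
    (hl : IsPath adj Set.univ y z l) : ∀ᵐ ω ∂μ, ω ∈ pathCylinder l → adj z (ω l.length) := by
  have := hμ.1
  obtain ⟨m, hm⟩ := hl.exists_length_eq
  set extended := ⋃ w : {w // adj z w}, pathCylinder (l ++ [w.1])
  have measurable_extended : MeasurableSet extended :=
    .iUnion fun w => measurableSet_pathCylinder _
  have extended_subset : extended ⊆ pathCylinder l := 
    Set.iUnion_subset fun w ω hω => (mem_pathCylinder_concat.1 hω).1
  have disjoint :
      Pairwise (Function.onFun Disjoint fun w : {w // adj z w} => pathCylinder (l ++ [w.1])) := 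
    fun w w' hww' => Set.disjoint_left.2 fun ω h h' => hww' <| Subtype.ext <|
      (mem_pathCylinder_concat.1 h).2.symm.trans (mem_pathCylinder_concat.1 h').2
  have measure_extended : μ extended = μ (pathCylinder l) := by
    rw [measure_iUnion disjoint fun w => measurableSet_pathCylinder _,
      hμ.measure_pathCylinder hl hm]
    calc _ = ∑' _ : {w // adj z w}, stepProb d ^ (m + 1) :=
          tsum_congr fun w => hμ.measure_pathCylinder
            (hl.append w.2 (isPath_singleton (Set.mem_univ w.1))) (by simp [hm])
      _ = stepProb d ^ m := by
          simp only [pow_succ, ENNReal.tsum_mul_left, tsum_adj_stepProb hd, mul_one]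
  have null : μ (pathCylinder l \ extended) = 0 := by
    rw [measure_sdiff extended_subset measurable_extended.nullMeasurableSet (measure_ne_top _ _),
      measure_extended, tsub_self]
  filter_upwards [measure_eq_zero_iff_ae_notMem.1 null] with ω hω hωl
  obtain ⟨w, hw⟩ := Set.mem_iUnion.1 (not_not.1 fun h => hω ⟨hωl, h⟩)
  exact (mem_pathCylinder_concat.1 hw).2 ▸ w.2

lemma ae_eq_start (hμ : IsSRWLaw μ y) : ∀ᵐ ω ∂μ, ω 0 = y := by
  have := hμ.1
  have measure_start : μ (pathCylinder [y]) = 1 := by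
    rw [hμ.measure_pathCylinder (m := 0) (isPath_singleton (Set.mem_univ y)) rfl, pow_zero]
  filter_upwards [(mem_ae_iff_prob_eq_one (measurableSet_pathCylinder [y])).2 measure_start]
    with ω hω
  simpa [pathCylinder] using hω

lemma ae_adj (hd : 0 < d) (hμ : IsSRWLaw μ y) : ∀ᵐ ω ∂μ, ∀ i, adj (ω i) (ω (i + 1)) := by
  have step : ∀ᵐ ω ∂μ, ∀ (l : List (V d)) (z : V d), IsPath adj Set.univ y z l →
      ω ∈ pathCylinder l → adj z (ω l.length) := by
    refine ae_all_iff.2 fun l => ae_all_iff.2 fun z => ?_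
    by_cases hl : IsPath adj Set.univ y z l
    · filter_upwards [hμ.ae_adj_of_mem_pathCylinder hd hl] with ω hω _ using hω
    · exact .of_forall fun ω h => absurd h hl
  filter_upwards [hμ.ae_eq_start, step] with ω start step i
  induction i using Nat.strong_induction_on with
  | _ i ih =>
    simpa using step _ _ (start ▸ isPath_map_range ih) (mem_pathCylinder_map_range ω (i + 1))

end IsSRWLaw

lemma isHittingPath_stoppedAtPointList {ω : ℕ → V d} {x : V d}
    (hω : ∀ i, adj (ω i) (ω (i + 1))) (hx : ∃ j, ω j = x) :
    IsHittingPath adj Set.univ (ω 0) x (stoppedAtPointList x ω) := by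
  have hx' : ∃ j, ω j ∈ ({x} : Set (V d)) := hx
  have hitIdx_eq : hitIdx {x} ω = Nat.find hx' := by
    rw [hitIdx, hitTimeE, dif_pos hx', ENat.toNat_natCast]
    congr
  have hit : ω (hitIdx {x} ω) = x := hitIdx_eq ▸ Nat.find_spec hx'
  refine ⟨?_, ?_⟩
  · simpa only [stoppedAtPointList, hit] using isPath_map_range (n := hitIdx {x} ω) fun i _ => hω i
  · simp only [stoppedAtPointList, List.range_succ, List.map_append, List.map_singleton,
      List.dropLast_concat, List.mem_map, List.mem_range, not_exists, not_and, hitIdx_eq]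
    exact fun i hi => Nat.find_min hx' hi

lemma IsSRWLaw.stepProb_mul_measure_le (hd : 0 < d) {μ : Measure (ℕ → V d)} {y : V d}
    (hμ : IsSRWLaw μ y) (x : V d) (S : List (V d) → Prop) :
    stepProb d * μ {ω | (∃ j, ω j = x) ∧ S (stoppedAtPointList x ω)} ≤
      genFun (stepProb d) fun l => IsHittingPath adj Set.univ y x l ∧ S l := by
  calc _ ≤ stepProb d * μ (⋃ l : {l // IsHittingPath adj Set.univ y x l ∧ S l},
          pathCylinder l.1) := by
        refine mul_le_mul_right (measure_mono_ae ?_) _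
        filter_upwards [hμ.ae_eq_start, hμ.ae_adj hd] with ω start hω ⟨hx, hS⟩
        exact Set.mem_iUnion.2 ⟨⟨_, start ▸ isHittingPath_stoppedAtPointList hω hx, hS⟩,
          mem_pathCylinder_map_range ω _⟩
    _ ≤ stepProb d * ∑' l : {l // IsHittingPath adj Set.univ y x l ∧ S l},
          μ (pathCylinder l.1) := mul_le_mul_right (measure_iUnion_le _) _
    _ = _ := by
        rw [← ENNReal.tsum_mul_left, genFun]
        refine tsum_congr fun l => ?_
        obtain ⟨m, hm⟩ := l.2.1.exists_length_eq
        rw [hμ.measure_pathCylinder l.2.1.toIsPath hm, hm, pow_succ']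

end WalkLaw

lemma genFun_loopErase_le_tilted (hd : 5 ≤ d) {t : ℝ} (ht : 0 ≤ t) (x y : V d) (M : ℕ) :
    genFun (stepProb d)
        (fun l => IsHittingPath adj Set.univ y x l ∧ (loopErase l).length ≤ M) ≤
      ENNReal.ofReal (Real.exp ((1 + returnMoment d) * t)) ^ M *
        genFun (ENNReal.ofReal (Real.exp (-t)) * stepProb d) (IsPath adj Set.univ y x) := by
  have moment_nonneg := returnMoment_nonneg (d := d)
  have tilt_le : stepProb d ≤ ENNReal.ofReal (Real.exp ((1 + returnMoment d) * t)) *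
      (ENNReal.ofReal (Real.exp (-t)) * stepProb d) := by
    calc stepProb d
        = ENNReal.ofReal (Real.exp t) * (ENNReal.ofReal (Real.exp (-t)) * stepProb d) := by
          rw [← mul_assoc, ofReal_exp_mul_ofReal_exp_neg, one_mul]
      _ ≤ _ := by
          gcongr
          nlinarith
  refine (genFun_loopErase_length_le (ENNReal.one_le_ofReal.2 (Real.one_le_exp (by positivity)))
    tilt_le (fun B v => genFun_loop_le_mul_tilted moment_nonneg ht
      (tsum_loop_le_returnMoment hd B v)) _ x y M).trans ?_
  gcongr
  exact genFun_mono _ fun l hl => hl.toIsPath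

lemma sum_sq_sub_eq_eudist_sq (x y : V d) : ∑ i, (((x - y) i : ℤ) : ℝ) ^ 2 = eudist x y ^ 2 := by
  rw [eudist, Real.sq_sqrt (Finset.sum_nonneg fun i _ => sq_nonneg _)]
  simp

lemma exists_measure_loopErase_length_le (hd : 5 ≤ d) :
    ∃ C > 0, ∀ (a : ℝ) (x y : V d) (M : ℕ) (μ : Measure (ℕ → V d)), IsSRWLaw μ y →
      μ {ω | (∃ j, ω j = x) ∧ (loopErase (stoppedAtPointList x ω)).length ≤ M} ≤
        ENNReal.ofReal (C * (1 + eudist x y) ^ ((2 : ℤ) - (d : ℤ)) *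
          Real.exp (M * ((1 + returnMoment d) * a ^ 2) - a * eudist x y / 2)) := by
  have hd₀ : 0 < d := by omega
  obtain ⟨C, hC, green_le⟩ := exists_tsum_exp_mul_gaussianMixture_le (ι := Fin d) (by simp; omega)
  refine ⟨C, hC, fun a x y M μ hμ => ?_⟩
  set E := ENNReal.ofReal (Real.exp ((1 + returnMoment d) * a ^ 2))
  have hr : 0 ≤ eudist x y := Real.sqrt_nonneg _
  refine (ENNReal.mul_le_mul_iff_right stepProb_ne_zero (stepProb_ne_top hd₀)).1 ?_
  calc _ ≤ genFun (stepProb d)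
          (fun l => IsHittingPath adj Set.univ y x l ∧ (loopErase l).length ≤ M) :=
        hμ.stepProb_mul_measure_le hd₀ x fun l => (loopErase l).length ≤ M
    _ ≤ E ^ M * genFun (ENNReal.ofReal (Real.exp (-a ^ 2)) * stepProb d)
          (IsPath adj Set.univ y x) := genFun_loopErase_le_tilted hd (sq_nonneg a) x y M
    _ ≤ E ^ M * (stepProb d * ENNReal.ofReal (C * (1 + eudist x y) ^ ((2 : ℤ) - (d : ℤ)) *
          Real.exp (-(a * eudist x y / 2)))) := by
        gcongr
        refine (genFun_isPath_exp_le hd₀ (a ^ 2) Set.univ y x).trans ?_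
        gcongr
        simpa using green_le a (eudist x y) (x - y) hr (sum_sq_sub_eq_eudist_sq x y)
    _ = _ := by
        rw [mul_left_comm, ← ENNReal.ofReal_pow (Real.exp_pos _).le,
          ← ENNReal.ofReal_mul (by positivity), ← Real.exp_nat_mul, sub_eq_add_neg (_ : ℝ),
          Real.exp_add, mul_left_comm (Real.exp _)]

/- The tilt `a = r / (8 K n)` makes the cost `(n + 1) K a² ≤ 2 n K a²` half of the gain
`a r / 2`. -/
lemma tilt_exponent_le {K n : ℝ} (hK : 0 < K) (hn : 1 ≤ n) (r : ℝ) :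
    (n + 1) * (K * (r / (8 * K * n)) ^ 2) - r / (8 * K * n) * r / 2 ≤
      -(32 * K)⁻¹ * r ^ 2 / n := by
  have : 0 < n := by linarith
  calc _ ≤ 2 * n * (K * (r / (8 * K * n)) ^ 2) - r / (8 * K * n) * r / 2 := by
        gcongr
        linarith
    _ = _ := by
        field_simp
        ring

/-- Theorem 3.11.  Let `d ≥ 5`.  With `F(y,x,n)` the event that SRW from `y` hits `x`
in finite time and the loop erasure of the walk stopped at its first hit of `x` has at
most `n` steps, there are constants `C, c > 0` depending only on `d` such that
`P( F(y,x,n) ) ≤ C (1 + |x-y|)^{2-d} exp( -c |x-y|²/n )`. -/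
theorem lerw_two_point_upper_bound :
    ∀ d : ℕ, 5 ≤ d → ∃ C c : ℝ, 0 < C ∧ 0 < c ∧
      ∀ (x y : V d) (n : ℕ), 1 ≤ n →
      ∀ μ : Measure (ℕ → V d), IsSRWLaw μ y →
        (μ { ω | (∃ j, ω j = x) ∧
              (loopErase (stoppedAtPointList x ω)).length ≤ n + 1 }).toReal
          ≤ C * (1 + eudist x y) ^ ((2 : ℤ) - (d : ℤ)) *
              Real.exp (-c * (eudist x y) ^ 2 / (n : ℝ)) := by
  intro d hd
  obtain ⟨C, hC, measure_le⟩ := exists_measure_loopErase_length_le hd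
  have moment_nonneg := returnMoment_nonneg (d := d)
  refine ⟨C, (32 * (1 + returnMoment d))⁻¹, hC, by positivity, fun x y n hn μ hμ => ?_⟩
  have hr : 0 ≤ eudist x y := Real.sqrt_nonneg _
  have exponent_le := tilt_exponent_le (K := 1 + returnMoment d) (n := n) (by positivity)
    (by exact_mod_cast hn) (eudist x y)
  refine ENNReal.toReal_le_of_le_ofReal (by positivity)
    ((measure_le (eudist x y / (8 * (1 + returnMoment d) * n)) x y (n + 1) μ hμ).trans ?_)
  push_cast
  gcongr

end USFPaper
end
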